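/- arXiv:1605.03046 — 2 statements merged into one kernel-verified Lean document; each statement's English description precedes it below -/
import Mathlib

section
/- Fix positive reals p₋₁, p₀, p₁ and let P(1) = p₋₁ + p₀ + p₁. Let b_{n,k} denote the total weight of Motzkin bridges of length n having exactly k sign changes, let e_n denote the total weight of positive excursions of length n, E(z) = Σ_{n≥0} e_n zⁿ, C(z) = 1/(1 − p₀z), and E₁(z) = E(z)/C(z) − 1. Then for all real z with 0 < z < 1/P(1) and all real u with 0 ≤ u ≤ 1: 0 ≤ u·E₁(z) < 1 and Σ_{n≥0} zⁿ (Σ_{k≥0} b_{n,k} u^k) = C(z) · (1 + 2E₁(z)/(1 − u·E₁(z))). -/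
open scoped BigOperators Classical

/-- Value of a step encoded by `Fin 3`: `0 ↦ -1`, `1 ↦ 0`, `2 ↦ +1`. -/
def stepVal (s : Fin 3) : ℤ := (s : ℤ) - 1

/-- Weight of a single step: `p₋₁` for `-1`, `p₀` for `0`, `p₁` for `+1`. -/
def stepWeight (pm p0 p1 : ℝ) (s : Fin 3) : ℝ :=
  if s = 0 then pm else if s = 1 then p0 else p1

/-- Weight of a Motzkin walk (product of its step weights). -/
def walkWeight (pm p0 p1 : ℝ) {n : ℕ} (w : Fin n → Fin 3) : ℝ :=
  ∏ i, stepWeight pm p0 p1 (w i)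

/-- Partial sum `ω_j` of the walk `w`. -/
def psum {n : ℕ} (w : Fin n → Fin 3) (j : ℕ) : ℤ :=
  ∑ i ∈ Finset.univ.filter (fun i : Fin n => (i : ℕ) < j), stepVal (w i)

/-- Total weight of Motzkin bridges of length `n`. -/
noncomputable def bridgeW (pm p0 p1 : ℝ) (n : ℕ) : ℝ :=
  ∑ w ∈ Finset.univ.filter (fun w : Fin n → Fin 3 => psum w n = 0),
    walkWeight pm p0 p1 w

/-- Number of returns to zero of a walk of length `n`. -/
def retZero {n : ℕ} (w : Fin n → Fin 3) : ℕ :=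
  ((Finset.Icc 1 n).filter (fun j => psum w j = 0)).card

/-- Total weight of walks of length `n` with exactly `k` returns to zero. -/
noncomputable def walkRetW (pm p0 p1 : ℝ) (n k : ℕ) : ℝ :=
  ∑ w ∈ Finset.univ.filter (fun w : Fin n → Fin 3 => retZero w = k),
    walkWeight pm p0 p1 w

/-- Number of sign changes of a walk of length `n`. -/
def signChanges {n : ℕ} (w : Fin n → Fin 3) : ℕ :=
  (((Finset.range (n+1)) ×ˢ (Finset.range (n+1))).filter
    (fun p => p.1 < p.2 ∧ psum w p.1 * psum w p.2 < 0 ∧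
      ∀ l ∈ Finset.Ioo p.1 p.2, psum w l = 0)).card

/-- Total weight of bridges of length `n` with exactly `k` sign changes. -/
noncomputable def bridgeSignW (pm p0 p1 : ℝ) (n k : ℕ) : ℝ :=
  ∑ w ∈ Finset.univ.filter
      (fun w : Fin n → Fin 3 => psum w n = 0 ∧ signChanges w = k),
    walkWeight pm p0 p1 w

/-- Total weight of positive excursions of length `n`. -/
noncomputable def posExcW (pm p0 p1 : ℝ) (n : ℕ) : ℝ :=
  ∑ w ∈ Finset.univ.filter
      (fun w : Fin n → Fin 3 => psum w n = 0 ∧ ∀ j ∈ Finset.range (n+1), 0 ≤ psum w j),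
    walkWeight pm p0 p1 w

/-- Total weight of negative excursions of length `n`. -/
noncomputable def negExcW (pm p0 p1 : ℝ) (n : ℕ) : ℝ :=
  ∑ w ∈ Finset.univ.filter
      (fun w : Fin n → Fin 3 => psum w n = 0 ∧ ∀ j ∈ Finset.range (n+1), psum w j ≤ 0),
    walkWeight pm p0 p1 w

/-- A positive bridge: a bridge whose last nonzero partial sum is positive. -/
def IsPosBridge {n : ℕ} (w : Fin n → Fin 3) : Prop :=
  psum w n = 0 ∧ ∃ j ∈ Finset.range (n+1),
    0 < psum w j ∧ ∀ l ∈ Finset.Ioc j n, psum w l = 0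

/-- A negative bridge: a bridge whose last nonzero partial sum is negative. -/
def IsNegBridge {n : ℕ} (w : Fin n → Fin 3) : Prop :=
  psum w n = 0 ∧ ∃ j ∈ Finset.range (n+1),
    psum w j < 0 ∧ ∀ l ∈ Finset.Ioc j n, psum w l = 0

instance {n : ℕ} (w : Fin n → Fin 3) : Decidable (IsPosBridge w) := by
  unfold IsPosBridge; infer_instance

instance {n : ℕ} (w : Fin n → Fin 3) : Decidable (IsNegBridge w) := by
  unfold IsNegBridge; infer_instance

/-- Total weight of positive bridges of length `n` with `k` sign changes. -/
noncomputable def posBridgeSignW (pm p0 p1 : ℝ) (n k : ℕ) : ℝ :=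
  ∑ w ∈ Finset.univ.filter
      (fun w : Fin n → Fin 3 => IsPosBridge w ∧ signChanges w = k),
    walkWeight pm p0 p1 w

/-- Total weight of negative bridges of length `n` with `k` sign changes. -/
noncomputable def negBridgeSignW (pm p0 p1 : ℝ) (n k : ℕ) : ℝ :=
  ∑ w ∈ Finset.univ.filter
      (fun w : Fin n → Fin 3 => IsNegBridge w ∧ signChanges w = k),
    walkWeight pm p0 p1 w

/-- Total weight of walks of length `n` with `k` sign changes. -/
noncomputable def walkSignW (pm p0 p1 : ℝ) (n k : ℕ) : ℝ :=
  ∑ w ∈ Finset.univ.filter (fun w : Fin n → Fin 3 => signChanges w = k),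
    walkWeight pm p0 p1 w

/-- Height of a walk of length `n` (as a natural number; it is `max_j ω_j ≥ 0`). -/
def height {n : ℕ} (w : Fin n → Fin 3) : ℕ :=
  (Finset.range (n+1)).sup (fun j => (psum w j).toNat)

/-- Total weight of walks of length `n` of height exactly `h`. -/
noncomputable def heightW (pm p0 p1 : ℝ) (n h : ℕ) : ℝ :=
  ∑ w ∈ Finset.univ.filter (fun w : Fin n → Fin 3 => height w = h),
    walkWeight pm p0 p1 w

/-!
Reading a walk from its first step turns both generating functions into `∑ zⁿ (Tⁿ g) x` for a
transfer operator `T` on a set of states `x` with `‖z T‖ < 1` in the supremum norm, so each is the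
unique bounded solution `X` of `X = g + z T X`. For excursions the state is the current height; for
bridges it is the current height together with the last nonzero height before it.

Away from height `0` the equation is solved by geometric profiles in the height, whose ratios `r`
(above the axis) and `t` (below) are the small roots of the kernel `z (p₋₁ + p₀ r + p₁ r²) = r` and
of its mirror image. The generating functions `z p₁ r` and `z p₋₁ t` of the arches above and below
the axis are equal, because both are the smaller root of `a (1 - p₀ z - a) = z² p₋₁ p₁`; matching at
height `0` expresses everything through this `a`.
-/

section TransferOperator

variable {S α : Type*} [Fintype α]

/-- The transfer operator of a deterministic automaton with states `S`, alphabet `α`, transition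
function `next`, and weight `c x s` for reading the letter `s` in state `x`. -/
def transferOp (c : S → α → ℝ) (next : S → α → S) : (S → ℝ) →ₗ[ℝ] (S → ℝ) where
  toFun f x := ∑ s, c x s * f (next x s)
  map_add' f g := by
    ext x
    simp only [Pi.add_apply, mul_add, Finset.sum_add_distrib]
  map_smul' b f := by
    ext x
    simp only [Pi.smul_apply, smul_eq_mul, RingHom.id_apply, Finset.mul_sum, mul_left_comm]

lemma transferOp_apply (c : S → α → ℝ) (next : S → α → S) (f : S → ℝ) (x : S) :
    transferOp c next f x = ∑ s, c x s * f (next x s) := rfl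

lemma abs_transferOp_le {c : S → α → ℝ} {q : ℝ} (hc : ∀ x, ∑ s, |c x s| ≤ q)
    (next : S → α → S) {f : S → ℝ} {M : ℝ} (hf : ∀ x, |f x| ≤ M) (x : S) :
    |transferOp c next f x| ≤ q * M :=
  calc |∑ s, c x s * f (next x s)|
      ≤ ∑ s, |c x s * f (next x s)| := Finset.abs_sum_le_sum_abs _ _
    _ ≤ ∑ s, |c x s| * M := Finset.sum_le_sum fun s _ => by
        rw [abs_mul]
        exact mul_le_mul_of_nonneg_left (hf _) (abs_nonneg _)
    _ = (∑ s, |c x s|) * M := by rw [Finset.sum_mul]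
    _ ≤ q * M := mul_le_mul_of_nonneg_right (hc x) ((abs_nonneg _).trans (hf x))

lemma sum_words_eq_transferOp_pow {c : S → α → ℝ} {next : S → α → S} {g : S → ℝ}
    {Φ : ∀ n : ℕ, S → (Fin n → α) → ℝ} (hΦ_zero : ∀ x w, Φ 0 x w = g x)
    (hΦ_cons : ∀ n x s w, Φ (n + 1) x (Fin.cons s w) = c x s * Φ n (next x s) w) (n : ℕ) (x : S) :
    ∑ w, Φ n x w = (transferOp c next ^ n) g x := by
  induction n generalizing x with
  | zero => simp [hΦ_zero]
  | succ n ih =>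
    rw [← (Fin.consEquiv fun _ : Fin (n + 1) => α).sum_comp, Fintype.sum_prod_type, pow_succ',
      Module.End.mul_apply, transferOp_apply]
    simp only [Fin.consEquiv, Equiv.coe_fn_mk, hΦ_cons, ← Finset.mul_sum, ih]

lemma hasSum_pow_apply_of_eq_add {T : (S → ℝ) →ₗ[ℝ] (S → ℝ)} {q : ℝ} (hq : q < 1)
    (hT : ∀ f M, (∀ x, |f x| ≤ M) → ∀ x, |T f x| ≤ q * M) {g X : S → ℝ} {M : ℝ}
    (hM : ∀ x, |X x| ≤ M) (hX : X = g + T X) (x : S) :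
    HasSum (fun n => (T ^ n) g x) (X x) := by
  have hq_nonneg : 0 ≤ q := by simpa using hT 0 1 (by simp) x
  have bound (n : ℕ) : ∀ x, |(T ^ n) X x| ≤ q ^ n * M := by
    induction n with
    | zero => simpa using hM
    | succ n ih =>
      rw [pow_succ', Module.End.mul_apply, pow_succ', mul_assoc]
      exact hT _ _ ih
  have hsum : Summable fun n => (T ^ n) X x :=
    .of_norm_bounded ((summable_geometric_of_lt_one hq_nonneg hq).mul_right M) fun n => bound n x
  have telescope (n : ℕ) : (T ^ n) g x = (T ^ n) X x - (T ^ (n + 1)) X x := by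
    rw [pow_succ, Module.End.mul_apply, ← Pi.sub_apply, ← map_sub, ← eq_sub_of_add_eq hX.symm]
  simpa [telescope] using hsum.hasSum.sub ((hasSum_nat_add_iff' 1).2 hsum.hasSum)

lemma hasSum_sum_words_mul_pow {c : S → α → ℝ} {next : S → α → S} {g : S → ℝ}
    {Φ : ∀ n : ℕ, S → (Fin n → α) → ℝ} (hΦ_zero : ∀ x w, Φ 0 x w = g x)
    (hΦ_cons : ∀ n x s w, Φ (n + 1) x (Fin.cons s w) = c x s * Φ n (next x s) w)
    {q z : ℝ} (hc : ∀ x, ∑ s, |c x s| ≤ q) (hz : |z| * q < 1)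
    {X : S → ℝ} {M : ℝ} (hM : ∀ x, |X x| ≤ M)
    (hX : ∀ x, X x = g x + z * ∑ s, c x s * X (next x s)) (x : S) :
    HasSum (fun n => (∑ w, Φ n x w) * z ^ n) (X x) := by
  have contract (f : S → ℝ) (C : ℝ) (hf : ∀ x, |f x| ≤ C) (x : S) :
      |(z • transferOp c next) f x| ≤ |z| * q * C := by
    rw [LinearMap.smul_apply, Pi.smul_apply, smul_eq_mul, abs_mul, mul_assoc]
    exact mul_le_mul_of_nonneg_left (abs_transferOp_le hc next hf x) (abs_nonneg z)
  have key := hasSum_pow_apply_of_eq_add hz contract hM (g := g) (funext hX) x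
  simpa only [sum_words_eq_transferOp_pow hΦ_zero hΦ_cons, smul_pow, LinearMap.smul_apply,
    Pi.smul_apply, smul_eq_mul, mul_comm] using key

end TransferOperator

section SignChanges

/-- The indices `i < j` form a sign change of the sequence `a`. -/
def IsSignChange (a : ℕ → ℤ) (i j : ℕ) : Prop :=
  i < j ∧ a i * a j < 0 ∧ ∀ l ∈ Finset.Ioo i j, a l = 0

/-- The number of sign changes of the finite sequence `a 0, …, a n`. -/
noncomputable def seqSignChanges (a : ℕ → ℤ) (n : ℕ) : ℕ :=
  ∑ i ∈ Finset.range (n + 1), Nat.count (IsSignChange a i) (n + 1)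

/-- The number of sign changes of `c, a 0, …, a n` whose first index is that of `c`; it is `0`
or `1`. -/
noncomputable def firstSignChange (c : ℤ) (a : ℕ → ℤ) (n : ℕ) : ℕ :=
  Nat.count (fun j => c * a j < 0 ∧ ∀ l < j, a l = 0) (n + 1)

/-- The number of sign changes of the finite sequence `c, a 0, …, a n`. -/
noncomputable def signChangesFrom (c : ℤ) (a : ℕ → ℤ) (n : ℕ) : ℕ :=
  firstSignChange c a n + seqSignChanges a n

lemma not_isSignChange_zero_right (a : ℕ → ℤ) (i : ℕ) : ¬ IsSignChange a i 0 :=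
  fun h => i.not_lt_zero h.1

lemma isSignChange_zero_succ (a : ℕ → ℤ) (j : ℕ) :
    IsSignChange a 0 (j + 1) ↔ a 0 * a (j + 1) < 0 ∧ ∀ l < j, a (l + 1) = 0 := by
  simp only [IsSignChange, Nat.succ_pos, true_and, Finset.mem_Ioo]
  refine and_congr_right fun _ => ⟨fun h l hl => h _ (by omega), fun h l hl => ?_⟩
  obtain ⟨l, rfl⟩ := Nat.exists_eq_succ_of_ne_zero hl.1.ne'
  exact h l (by omega)

lemma isSignChange_succ_succ (a : ℕ → ℤ) (i j : ℕ) :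
    IsSignChange a (i + 1) (j + 1) ↔ IsSignChange (fun l => a (l + 1)) i j := by
  simp only [IsSignChange, add_lt_add_iff_right, Finset.mem_Ioo]
  refine and_congr_right fun _ => and_congr_right fun _ =>
    ⟨fun h l hl => h _ (by omega), fun h l hl => ?_⟩
  obtain ⟨l, rfl⟩ := Nat.exists_eq_succ_of_ne_zero (Nat.ne_zero_of_lt hl.1)
  exact h l (by omega)

lemma seqSignChanges_zero (a : ℕ → ℤ) : seqSignChanges a 0 = 0 := by
  simp [seqSignChanges, Nat.count_succ, not_isSignChange_zero_right]

lemma seqSignChanges_succ (a : ℕ → ℤ) (n : ℕ) :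
    seqSignChanges a (n + 1) = signChangesFrom (a 0) (fun j => a (j + 1)) n := by
  have count_shift (i : ℕ) : Nat.count (IsSignChange a i) (n + 1 + 1) =
      Nat.count (fun j => IsSignChange a i (j + 1)) (n + 1) := by
    rw [Nat.count_succ', if_neg (not_isSignChange_zero_right a i), add_zero]
  rw [seqSignChanges, Finset.sum_range_succ', add_comm (Finset.sum _ _)]
  simp only [count_shift, isSignChange_zero_succ, isSignChange_succ_succ]
  simp only [signChangesFrom, firstSignChange, seqSignChanges]

lemma firstSignChange_zero_left (a : ℕ → ℤ) (n : ℕ) : firstSignChange 0 a n = 0 := by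
  simp [firstSignChange, Nat.count_eq_card_filter_range]

lemma firstSignChange_succ (c : ℤ) (a : ℕ → ℤ) (n : ℕ) :
    firstSignChange c a (n + 1) = (if c * a 0 < 0 then 1 else 0) +
      if a 0 = 0 then firstSignChange c (fun j => a (j + 1)) n else 0 := by
  rw [firstSignChange, Nat.count_succ', add_comm]
  simp only [Nat.forall_lt_succ_left']
  by_cases h0 : a 0 = 0 <;> simp [h0, firstSignChange, Nat.count_eq_card_filter_range]

lemma signChangesFrom_zero_left (a : ℕ → ℤ) (n : ℕ) :
    signChangesFrom 0 a n = seqSignChanges a n := by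
  rw [signChangesFrom, firstSignChange_zero_left, zero_add]

lemma signChangesFrom_zero_right (c : ℤ) {a : ℕ → ℤ} (ha : a 0 = 0) :
    signChangesFrom c a 0 = 0 := by
  simp [signChangesFrom, firstSignChange, seqSignChanges_zero, Nat.count_succ, ha]

lemma signChangesFrom_succ (c : ℤ) (a : ℕ → ℤ) (n : ℕ) :
    signChangesFrom c a (n + 1) = (if c * a 0 < 0 then 1 else 0) +
      signChangesFrom (if a 0 = 0 then c else a 0) (fun j => a (j + 1)) n := by
  rw [signChangesFrom, seqSignChanges_succ, firstSignChange_succ, add_assoc]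
  by_cases h0 : a 0 = 0
  · simp only [h0, if_true, signChangesFrom_zero_left]
    rw [signChangesFrom]
  · simp only [h0, if_false, zero_add]

lemma signChanges_eq_seqSignChanges {n : ℕ} (w : Fin n → Fin 3) :
    signChanges w = seqSignChanges (psum w) n := by
  rw [signChanges, Finset.card_filter, Finset.sum_product]
  simp [seqSignChanges, Nat.count_eq_card_filter_range, IsSignChange]

end SignChanges

section Steps

lemma psum_zero {n : ℕ} (w : Fin n → Fin 3) : psum w 0 = 0 := by
  simp [psum]

lemma psum_cons_succ {n : ℕ} (s : Fin 3) (w : Fin n → Fin 3) (j : ℕ) :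
    psum (Fin.cons s w : Fin (n + 1) → Fin 3) (j + 1) = stepVal s + psum w j := by
  simp [psum, Finset.sum_filter, Fin.sum_univ_succ]

variable {pm p0 p1 : ℝ}

lemma stepWeight_nonneg (hpm : 0 ≤ pm) (hp0 : 0 ≤ p0) (hp1 : 0 ≤ p1) (s : Fin 3) :
    0 ≤ stepWeight pm p0 p1 s := by
  unfold stepWeight
  split_ifs <;> assumption

lemma walkWeight_nonneg (hpm : 0 ≤ pm) (hp0 : 0 ≤ p0) (hp1 : 0 ≤ p1) {n : ℕ}
    (w : Fin n → Fin 3) : 0 ≤ walkWeight pm p0 p1 w :=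
  Finset.prod_nonneg fun _ _ => stepWeight_nonneg hpm hp0 hp1 _

lemma walkWeight_fin_zero (pm p0 p1 : ℝ) (w : Fin 0 → Fin 3) : walkWeight pm p0 p1 w = 1 :=
  Fin.prod_univ_zero _

lemma walkWeight_cons (pm p0 p1 : ℝ) {n : ℕ} (s : Fin 3) (w : Fin n → Fin 3) :
    walkWeight pm p0 p1 (Fin.cons s w : Fin (n + 1) → Fin 3) =
      stepWeight pm p0 p1 s * walkWeight pm p0 p1 w := by
  simp [walkWeight, Fin.prod_univ_succ]

lemma sum_mul_stepWeight_mul_comp_add_stepVal (pm p0 p1 b : ℝ) (f : ℤ → ℝ) (h : ℤ) :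
    ∑ s, b * stepWeight pm p0 p1 s * f (h + stepVal s) =
      b * (pm * f (h - 1) + p0 * f h + p1 * f (h + 1)) := by
  simp only [mul_assoc, ← Finset.mul_sum]
  simp [Fin.sum_univ_three, stepWeight, stepVal, sub_eq_add_neg]

lemma sum_abs_mul_stepWeight_le (hpm : 0 ≤ pm) (hp0 : 0 ≤ p0) (hp1 : 0 ≤ p1) {b : ℝ}
    (hb : |b| ≤ 1) : ∑ s, |b * stepWeight pm p0 p1 s| ≤ pm + p0 + p1 := by
  have htotal : ∑ s, stepWeight pm p0 p1 s = pm + p0 + p1 := by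
    simp [Fin.sum_univ_three, stepWeight]
  simp only [abs_mul, abs_of_nonneg (stepWeight_nonneg hpm hp0 hp1 _), ← Finset.mul_sum, htotal]
  exact mul_le_of_le_one_left (by positivity) hb

end Steps

section Kernel

/-- `r` is a root in `(-1, 1)` of the kernel of the walk. It is the value at `z` of the generating
function of the walks from height `1` to height `0` that reach `0` only at their last step, so
`z * p1 * r` is that of the arches, which leave the axis upwards and stop on returning to it. -/
structure IsSmallKernelRoot (pm p0 p1 z r : ℝ) : Prop where
  abs_lt_one : |r| < 1
  eq : z * (pm + p0 * r + p1 * r ^ 2) = r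

variable {pm p0 p1 z r t : ℝ}

lemma exists_isSmallKernelRoot (hpm : 0 ≤ pm) (hp0 : 0 ≤ p0) (hp1 : 0 ≤ p1)
    (hz : |z| * (pm + p0 + p1) < 1) : ∃ r, IsSmallKernelRoot pm p0 p1 z r := by
  have hcont : ContinuousOn (fun r : ℝ => r - z * (pm + p0 * r + p1 * r ^ 2)) (Set.Icc (-1) 1) := by
    fun_prop
  have hleft : (-1 : ℝ) - z * (pm + p0 * -1 + p1 * (-1) ^ 2) < 0 := by
    linarith [mul_nonneg (abs_nonneg z) hp0, mul_le_mul_of_nonneg_right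
      (neg_abs_le z) (add_nonneg hpm hp1), mul_le_mul_of_nonneg_right (le_abs_self z) hp0]
  have hright : 0 < (1 : ℝ) - z * (pm + p0 * 1 + p1 * 1 ^ 2) := by
    have := mul_le_mul_of_nonneg_right (le_abs_self z) (by positivity : 0 ≤ pm + p0 + p1)
    linarith
  obtain ⟨r, hr, hroot⟩ := intermediate_value_Ioo (by norm_num) hcont ⟨hleft, hright⟩
  exact ⟨r, abs_lt.2 hr, (sub_eq_zero.1 hroot).symm⟩

lemma mul_lt_one_of_abs_mul_lt_one (hpm : 0 ≤ pm) (hp0 : 0 ≤ p0) (hp1 : 0 ≤ p1)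
    (hz : |z| * (pm + p0 + p1) < 1) : p0 * z < 1 :=
  calc p0 * z ≤ p0 * |z| := mul_le_mul_of_nonneg_left (le_abs_self z) hp0
    _ ≤ (pm + p0 + p1) * |z| := mul_le_mul_of_nonneg_right (by linarith) (abs_nonneg z)
    _ < 1 := by rwa [mul_comm]

namespace IsSmallKernelRoot

lemma two_mul_arch_lt (hr : IsSmallKernelRoot pm p0 p1 z r) (hp0 : 0 ≤ p0) (hp1 : 0 ≤ p1)
    (hz : |z| * (pm + p0 + p1) < 1) : 2 * (z * p1 * r) < 1 - p0 * z := by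
  obtain ⟨hr_gt, hr_lt⟩ := abs_lt.1 hr.abs_lt_one
  rcases abs_cases z with ⟨habs, hz0⟩ | ⟨habs, hz0⟩ <;> rw [habs] at hz
  · have hfactor : (1 - r) * (1 - p0 * z - z * p1 * (1 + r)) = 1 - z * (pm + p0 + p1) := by
      linear_combination hr.eq
    have := pos_of_mul_pos_right (hfactor.symm ▸ sub_pos.2 hz) (sub_nonneg.2 hr_lt.le)
    nlinarith [mul_nonneg hz0 hp1]
  · have hfactor : (1 + r) * (1 - p0 * z + z * p1 * (1 - r)) = 1 + z * (pm - p0 + p1) := by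
      linear_combination -hr.eq
    have hvalue : 0 < 1 + z * (pm - p0 + p1) := by nlinarith
    have := pos_of_mul_pos_right (hfactor.symm ▸ hvalue) (by linarith)
    nlinarith [mul_nonneg_of_nonpos_of_nonpos hz0.le (neg_nonpos.2 hp1)]

lemma arch_mul_one_sub_arch (hr : IsSmallKernelRoot pm p0 p1 z r) :
    z * p1 * r * (1 - p0 * z - z * p1 * r) = z ^ 2 * (pm * p1) := by
  linear_combination -z * p1 * hr.eq

lemma arch_nonneg (hr : IsSmallKernelRoot pm p0 p1 z r) (hpm : 0 ≤ pm) (hp1 : 0 ≤ p1)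
    (hsmall : 2 * (z * p1 * r) < 1 - p0 * z) (hC : 0 < 1 - p0 * z) : 0 ≤ z * p1 * r := by
  have hprod : 0 ≤ z * p1 * r * (1 - p0 * z - z * p1 * r) := by
    rw [hr.arch_mul_one_sub_arch]
    positivity
  exact nonneg_of_mul_nonneg_left hprod (by linarith)

lemma arch_eq_arch (hr : IsSmallKernelRoot pm p0 p1 z r) (ht : IsSmallKernelRoot p1 p0 pm z t)
    (hr_small : 2 * (z * p1 * r) < 1 - p0 * z) (ht_small : 2 * (z * pm * t) < 1 - p0 * z) :
    z * pm * t = z * p1 * r := by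
  have hprod : (z * pm * t - z * p1 * r) * (1 - p0 * z - z * p1 * r - z * pm * t) = 0 := by
    linear_combination ht.arch_mul_one_sub_arch - hr.arch_mul_one_sub_arch
  exact sub_eq_zero.1 ((mul_eq_zero_iff_right (by linarith)).1 hprod)

end IsSmallKernelRoot

lemma exists_isSmallKernelRoot_pair (hpm : 0 ≤ pm) (hp0 : 0 ≤ p0) (hp1 : 0 ≤ p1)
    (hz : |z| * (pm + p0 + p1) < 1) :
    ∃ r t, IsSmallKernelRoot pm p0 p1 z r ∧ IsSmallKernelRoot p1 p0 pm z t ∧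
      z * pm * t = z * p1 * r ∧ 0 ≤ z * p1 * r ∧ 2 * (z * p1 * r) < 1 - p0 * z := by
  have hz' : |z| * (p1 + p0 + pm) < 1 := by rwa [add_comm, add_comm p1, ← add_assoc]
  obtain ⟨r, hr⟩ := exists_isSmallKernelRoot hpm hp0 hp1 hz
  obtain ⟨t, ht⟩ := exists_isSmallKernelRoot hp1 hp0 hpm hz'
  have hr_small := hr.two_mul_arch_lt hp0 hp1 hz
  have hC := sub_pos.2 (mul_lt_one_of_abs_mul_lt_one hpm hp0 hp1 hz)
  exact ⟨r, t, hr, ht, hr.arch_eq_arch ht hr_small (ht.two_mul_arch_lt hp0 hpm hz'),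
    hr.arch_nonneg hpm hp1 hr_small hC, hr_small⟩

/-- The solution of the kernel recurrence in the height on either side of the axis: equal to `r ^ h`
above the axis and to `t ^ (-h)` below it. One of the truncated exponents is always `0`. -/
def twoSidedGeom (r t : ℝ) (h : ℤ) : ℝ :=
  r ^ h.toNat * t ^ (-h).toNat

lemma twoSidedGeom_zero (r t : ℝ) : twoSidedGeom r t 0 = 1 := by
  simp [twoSidedGeom]

lemma twoSidedGeom_one (r t : ℝ) : twoSidedGeom r t 1 = r := by
  simp [twoSidedGeom]

lemma twoSidedGeom_neg (r t : ℝ) (h : ℤ) : twoSidedGeom r t (-h) = twoSidedGeom t r h := by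
  rw [twoSidedGeom, twoSidedGeom, neg_neg, mul_comm]

lemma twoSidedGeom_neg_one (r t : ℝ) : twoSidedGeom r t (-1) = t := by
  rw [twoSidedGeom_neg, twoSidedGeom_one]

lemma abs_twoSidedGeom_le_one (hr : |r| ≤ 1) (ht : |t| ≤ 1) (h : ℤ) : |twoSidedGeom r t h| ≤ 1 := by
  rw [twoSidedGeom, abs_mul, abs_pow, abs_pow]
  exact mul_le_one₀ (pow_le_one₀ (abs_nonneg r) hr) (by positivity) (pow_le_one₀ (abs_nonneg t) ht)

lemma twoSidedGeom_eq_of_pos (hr : z * (pm + p0 * r + p1 * r ^ 2) = r) (t : ℝ) {h : ℤ}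
    (hh : 0 < h) :
    z * (pm * twoSidedGeom r t (h - 1) + p0 * twoSidedGeom r t h + p1 * twoSidedGeom r t (h + 1)) =
      twoSidedGeom r t h := by
  have hgeom (k : ℕ) : twoSidedGeom r t k = r ^ k := by simp [twoSidedGeom]
  obtain ⟨k, rfl⟩ : ∃ k : ℕ, h = (k + 1 : ℕ) := ⟨(h - 1).toNat, by omega⟩
  rw [show ((k + 1 : ℕ) : ℤ) - 1 = k by simp, ← Nat.cast_add_one, hgeom, hgeom, hgeom]
  linear_combination r ^ k * hr

lemma twoSidedGeom_eq_of_neg (r : ℝ) (ht : z * (p1 + p0 * t + pm * t ^ 2) = t) {h : ℤ}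
    (hh : h < 0) :
    z * (pm * twoSidedGeom r t (h - 1) + p0 * twoSidedGeom r t h + p1 * twoSidedGeom r t (h + 1)) =
      twoSidedGeom r t h := by
  have hreflect := twoSidedGeom_eq_of_pos ht r (neg_pos.2 hh)
  rw [show -h - 1 = -(h + 1) by ring, show -h + 1 = -(h - 1) by ring, twoSidedGeom_neg,
    twoSidedGeom_neg, twoSidedGeom_neg] at hreflect
  linear_combination hreflect

end Kernel

section Excursions

variable {pm p0 p1 z r : ℝ}

/-- The weight of the walk `w` if, started at height `h`, it stays nonnegative and ends at `0`;
otherwise `0`. -/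
noncomputable def excursionWeight (pm p0 p1 : ℝ) (n : ℕ) (h : ℤ) (w : Fin n → Fin 3) : ℝ :=
  if h + psum w n = 0 ∧ ∀ j ∈ Finset.range (n + 1), 0 ≤ h + psum w j then
    walkWeight pm p0 p1 w else 0

lemma excursionWeight_fin_zero (pm p0 p1 : ℝ) (h : ℤ) (w : Fin 0 → Fin 3) :
    excursionWeight pm p0 p1 0 h w = if h = 0 then 1 else 0 := by
  by_cases h0 : h = 0 <;> simp [excursionWeight, psum_zero, walkWeight_fin_zero, h0]

lemma excursionWeight_cons (pm p0 p1 : ℝ) (n : ℕ) (h : ℤ) (s : Fin 3) (w : Fin n → Fin 3) :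
    excursionWeight pm p0 p1 (n + 1) h (Fin.cons s w) =
      (if 0 ≤ h then 1 else 0) * stepWeight pm p0 p1 s *
        excursionWeight pm p0 p1 n (h + stepVal s) w := by
  have hnonneg : (∀ j ∈ Finset.range (n + 1 + 1),
      0 ≤ h + psum (Fin.cons s w : Fin (n + 1) → Fin 3) j) ↔
      0 ≤ h ∧ ∀ j ∈ Finset.range (n + 1), 0 ≤ h + stepVal s + psum w j := by
    simp only [Finset.mem_range]
    rw [Nat.forall_lt_succ_left']
    simp only [psum_zero, psum_cons_succ, add_zero, add_assoc]
  simp only [excursionWeight, hnonneg, psum_cons_succ, walkWeight_cons, ← add_assoc]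
  by_cases hh : 0 ≤ h <;> simp [hh]

lemma sum_excursionWeight_zero (pm p0 p1 : ℝ) (n : ℕ) :
    ∑ w, excursionWeight pm p0 p1 n 0 w = posExcW pm p0 p1 n := by
  simp [excursionWeight, posExcW, Finset.sum_filter]

lemma hasSum_posExcW (hpm : 0 ≤ pm) (hp0 : 0 ≤ p0) (hp1 : 0 ≤ p1)
    (hz : |z| * (pm + p0 + p1) < 1) (hr : IsSmallKernelRoot pm p0 p1 z r)
    (hD : 1 - p0 * z - z * p1 * r ≠ 0) :
    HasSum (fun n => posExcW pm p0 p1 n * z ^ n) (1 / (1 - p0 * z - z * p1 * r)) := by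
  set e := 1 / (1 - p0 * z - z * p1 * r)
  have he_eq : e * (1 - p0 * z - z * p1 * r) = 1 := one_div_mul_cancel hD
  have hbound (h : ℤ) : |e * twoSidedGeom r 0 h| ≤ |e| := by
    rw [abs_mul]
    exact mul_le_of_le_one_right (abs_nonneg e)
      (abs_twoSidedGeom_le_one hr.abs_lt_one.le (by simp) h)
  have hfix (h : ℤ) : e * twoSidedGeom r 0 h = (if h = 0 then 1 else 0) +
      z * ∑ s, (if 0 ≤ h then 1 else 0) * stepWeight pm p0 p1 s *
        (e * twoSidedGeom r 0 (h + stepVal s)) := by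
    rw [sum_mul_stepWeight_mul_comp_add_stepVal pm p0 p1 _ fun k => e * twoSidedGeom r 0 k]
    rcases lt_trichotomy h 0 with hh | rfl | hh
    · simp [twoSidedGeom, hh.ne, hh.not_ge, Int.toNat_of_nonpos hh.le]
    · rw [if_pos rfl, if_pos le_rfl, zero_sub, zero_add, twoSidedGeom_zero, twoSidedGeom_one,
        twoSidedGeom_neg_one]
      linear_combination he_eq
    · rw [if_neg hh.ne', if_pos hh.le]
      linear_combination -e * twoSidedGeom_eq_of_pos hr.eq 0 hh
  have key := hasSum_sum_words_mul_pow (excursionWeight_fin_zero pm p0 p1)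
    (excursionWeight_cons pm p0 p1)
    (fun h => sum_abs_mul_stepWeight_le hpm hp0 hp1 (by split_ifs <;> simp)) hz hbound hfix 0
  simpa [sum_excursionWeight_zero, twoSidedGeom_zero] using key

end Excursions

section Bridges

variable {pm p0 p1 z u : ℝ}

/-- Total weight of the bridges of length `n`, a bridge with `k` sign changes being weighted by an
extra `u ^ k`. -/
noncomputable def markedBridgeW (pm p0 p1 u : ℝ) (n : ℕ) : ℝ :=
  ∑ w ∈ Finset.univ.filter (fun w : Fin n → Fin 3 => psum w n = 0),
    u ^ signChanges w * walkWeight pm p0 p1 w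

/-- For `x = (c, h)`, the weight of the walk `w` if, started at height `h`, it ends at `0`, times
`u` to the number of sign changes of `c` followed by its heights; otherwise `0`. -/
noncomputable def bridgeWeight (pm p0 p1 u : ℝ) (n : ℕ) (x : ℤ × ℤ) (w : Fin n → Fin 3) : ℝ :=
  if x.2 + psum w n = 0 then
    u ^ signChangesFrom x.1 (fun j => x.2 + psum w j) n * walkWeight pm p0 p1 w else 0

lemma bridgeWeight_fin_zero (pm p0 p1 u : ℝ) (x : ℤ × ℤ) (w : Fin 0 → Fin 3) :
    bridgeWeight pm p0 p1 u 0 x w = if x.2 = 0 then 1 else 0 := by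
  by_cases h0 : x.2 = 0 <;>
    simp [bridgeWeight, psum_zero, walkWeight_fin_zero, signChangesFrom_zero_right, h0]

lemma bridgeWeight_cons (pm p0 p1 u : ℝ) (n : ℕ) (x : ℤ × ℤ) (s : Fin 3) (w : Fin n → Fin 3) :
    bridgeWeight pm p0 p1 u (n + 1) x (Fin.cons s w) =
      (if x.1 * x.2 < 0 then u else 1) * stepWeight pm p0 p1 s *
        bridgeWeight pm p0 p1 u n (if x.2 = 0 then x.1 else x.2, x.2 + stepVal s) w := by
  simp only [bridgeWeight, signChangesFrom_succ, psum_zero, psum_cons_succ, walkWeight_cons,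
    add_zero, ← add_assoc, pow_add, pow_ite, pow_one, pow_zero, mul_ite, mul_zero]
  congr 1
  ring

lemma sum_bridgeWeight_zero (pm p0 p1 u : ℝ) (n : ℕ) :
    ∑ w, bridgeWeight pm p0 p1 u n 0 w = markedBridgeW pm p0 p1 u n := by
  simp only [bridgeWeight, markedBridgeW, Finset.sum_filter, signChanges_eq_seqSignChanges,
    Prod.fst_zero, Prod.snd_zero, zero_add, signChangesFrom_zero_left]

/-- The bounded solution of the first-step equations for bridges. The state `(c, h)` has current
height `h` and last earlier nonzero height `c`, with `c = 0` if there is none; `γ` is the value at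
`(0, 0)` and `β` the common value at `(c, 0)` for `c ≠ 0`. -/
noncomputable def bridgeSolution (u r t β γ : ℝ) (x : ℤ × ℤ) : ℝ :=
  if x = 0 then γ else (if x.1 * x.2 < 0 then u else 1) * (β * twoSidedGeom r t x.2)

variable {r t β γ : ℝ}

lemma bridgeSolution_of_mul_nonneg (u r t β γ : ℝ) {c : ℤ} (hc : c ≠ 0) {h : ℤ} (hch : 0 ≤ c * h) :
    bridgeSolution u r t β γ (c, h) = β * twoSidedGeom r t h := by
  simp [bridgeSolution, hc, hch.not_gt]

lemma abs_bridgeSolution_le (hu : |u| ≤ 1) (hr : |r| ≤ 1) (ht : |t| ≤ 1) (β γ : ℝ) (x : ℤ × ℤ) :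
    |bridgeSolution u r t β γ x| ≤ max |γ| |β| := by
  have hmark : |if x.1 * x.2 < 0 then u else 1| ≤ 1 := by
    split_ifs <;> simp [hu]
  by_cases hx : x = 0
  · rw [bridgeSolution, if_pos hx]
    exact le_max_left _ _
  rw [bridgeSolution, if_neg hx, mul_left_comm, abs_mul, abs_mul]
  exact le_max_of_le_right <| mul_le_of_le_one_right (abs_nonneg β) <|
    mul_le_one₀ hmark (abs_nonneg _) (abs_twoSidedGeom_le_one hr ht x.2)

lemma bridgeSolution_eq_of_ne_zero (hr : z * (pm + p0 * r + p1 * r ^ 2) = r)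
    (ht : z * (p1 + p0 * t + pm * t ^ 2) = t) (u β γ : ℝ) (c : ℤ) {h : ℤ} (hh : h ≠ 0) :
    bridgeSolution u r t β γ (c, h) = (if c * h < 0 then u else 1) *
      (z * (pm * bridgeSolution u r t β γ (h, h - 1) + p0 * bridgeSolution u r t β γ (h, h) +
        p1 * bridgeSolution u r t β γ (h, h + 1))) := by
  have hdown : 0 ≤ h * (h - 1) := by rcases hh.lt_or_gt with h | h <;> nlinarith
  have hup : 0 ≤ h * (h + 1) := by rcases hh.lt_or_gt with h | h <;> nlinarith
  have hgeom : z * (pm * twoSidedGeom r t (h - 1) + p0 * twoSidedGeom r t h +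
      p1 * twoSidedGeom r t (h + 1)) = twoSidedGeom r t h :=
    hh.lt_or_gt.elim (twoSidedGeom_eq_of_neg r ht) (twoSidedGeom_eq_of_pos hr t)
  rw [bridgeSolution_of_mul_nonneg _ _ _ _ _ hh hdown,
    bridgeSolution_of_mul_nonneg _ _ _ _ _ hh (mul_self_nonneg h),
    bridgeSolution_of_mul_nonneg _ _ _ _ _ hh hup, bridgeSolution, if_neg (by simp [hh])]
  linear_combination -(if c * h < 0 then u else 1) * β * hgeom

lemma bridgeSolution_eq_of_eq_zero (ha : z * pm * t = z * p1 * r)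
    (hβ : β * (1 - p0 * z - z * p1 * r - u * (z * p1 * r)) = 1)
    (hγ : γ * (1 - p0 * z) = 1 + 2 * (z * p1 * r) * β) (c : ℤ) :
    bridgeSolution u r t β γ (c, 0) = 1 +
      z * (pm * bridgeSolution u r t β γ (c, -1) + p0 * bridgeSolution u r t β γ (c, 0) +
        p1 * bridgeSolution u r t β γ (c, 1)) := by
  have hdown : bridgeSolution u r t β γ (c, -1) = (if 0 < c then u else 1) * (β * t) := by
    simp [bridgeSolution, twoSidedGeom_neg_one]
  have hup : bridgeSolution u r t β γ (c, 1) = (if c < 0 then u else 1) * (β * r) := by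
    simp [bridgeSolution, twoSidedGeom_one]
  have hflat : bridgeSolution u r t β γ (c, 0) = if c = 0 then γ else β := by
    simp [bridgeSolution, twoSidedGeom_zero]
  rw [hdown, hup, hflat]
  rcases lt_trichotomy c 0 with hc | rfl | hc
  · rw [if_neg hc.not_gt, if_pos hc, if_neg hc.ne]
    linear_combination hβ - β * ha
  · rw [if_neg (lt_irrefl 0), if_pos rfl]
    linear_combination hγ - β * ha
  · rw [if_pos hc, if_neg hc.not_gt, if_neg hc.ne']
    linear_combination hβ - u * β * ha

lemma hasSum_markedBridgeW (hpm : 0 ≤ pm) (hp0 : 0 ≤ p0) (hp1 : 0 ≤ p1)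
    (hz : |z| * (pm + p0 + p1) < 1) (hu : |u| ≤ 1) (hr : IsSmallKernelRoot pm p0 p1 z r)
    (ht : IsSmallKernelRoot p1 p0 pm z t) (ha : z * pm * t = z * p1 * r)
    (hβ : β * (1 - p0 * z - z * p1 * r - u * (z * p1 * r)) = 1)
    (hγ : γ * (1 - p0 * z) = 1 + 2 * (z * p1 * r) * β) :
    HasSum (fun n => markedBridgeW pm p0 p1 u n * z ^ n) γ := by
  have hfix (x : ℤ × ℤ) : bridgeSolution u r t β γ x = (if x.2 = 0 then 1 else 0) +
      z * ∑ s, (if x.1 * x.2 < 0 then u else 1) * stepWeight pm p0 p1 s *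
        bridgeSolution u r t β γ (if x.2 = 0 then x.1 else x.2, x.2 + stepVal s) := by
    obtain ⟨c, h⟩ := x
    rw [sum_mul_stepWeight_mul_comp_add_stepVal pm p0 p1 _
      fun k => bridgeSolution u r t β γ (if h = 0 then c else h, k)]
    rcases eq_or_ne h 0 with rfl | hh
    · simpa using bridgeSolution_eq_of_eq_zero ha hβ hγ c
    · simpa [hh, mul_left_comm] using bridgeSolution_eq_of_ne_zero hr.eq ht.eq u β γ c hh
  have key := hasSum_sum_words_mul_pow (bridgeWeight_fin_zero pm p0 p1 u)
    (bridgeWeight_cons pm p0 p1 u)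
    (fun x => sum_abs_mul_stepWeight_le hpm hp0 hp1 (by split_ifs <;> simp [hu])) hz
    (abs_bridgeSolution_le hu hr.abs_lt_one.le ht.abs_lt_one.le β γ) hfix 0
  simpa [sum_bridgeWeight_zero, bridgeSolution] using key

lemma hasSum_bridgeSignW (pm p0 p1 u : ℝ) (n : ℕ) :
    HasSum (fun k => bridgeSignW pm p0 p1 n k * u ^ k) (markedBridgeW pm p0 p1 u n) := by
  simp only [bridgeSignW, Finset.sum_filter, Finset.sum_mul, markedBridgeW]
  refine hasSum_sum fun w _ => ?_
  convert hasSum_ite_eq (signChanges w)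
    (if psum w n = 0 then u ^ signChanges w * walkWeight pm p0 p1 w else 0) using 2 with k
  by_cases hk : k = signChanges w
  · by_cases h0 : psum w n = 0 <;> simp [hk, h0, mul_comm]
  · simp [hk, Ne.symm hk]

lemma exists_hasSum_posExcW_markedBridgeW (hpm : 0 ≤ pm) (hp0 : 0 ≤ p0) (hp1 : 0 ≤ p1)
    (hz : |z| * (pm + p0 + p1) < 1) :
    ∃ a, 0 ≤ a ∧ 2 * a < 1 - p0 * z ∧
      HasSum (fun n => posExcW pm p0 p1 n * z ^ n) (1 / (1 - p0 * z - a)) ∧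
      ∀ u, |u| ≤ 1 → HasSum (fun n => markedBridgeW pm p0 p1 u n * z ^ n)
        (1 / (1 - p0 * z) * (1 + 2 * a / (1 - p0 * z - a - u * a))) := by
  obtain ⟨r, t, hr, ht, hrt, ha, hsmall⟩ := exists_isSmallKernelRoot_pair hpm hp0 hp1 hz
  refine ⟨z * p1 * r, ha, hsmall, hasSum_posExcW hpm hp0 hp1 hz hr (by linarith), fun u hu => ?_⟩
  have hC : 1 - p0 * z ≠ 0 := by linarith
  have hD : 1 - p0 * z - z * p1 * r - u * (z * p1 * r) ≠ 0 := by
    have := mul_le_of_le_one_left ha (abs_le.1 hu).2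
    linarith
  refine hasSum_markedBridgeW hpm hp0 hp1 hz hu hr ht hrt (one_div_mul_cancel hD) ?_
  field_simp

lemma bridgeSignW_nonneg (hpm : 0 ≤ pm) (hp0 : 0 ≤ p0) (hp1 : 0 ≤ p1) (n k : ℕ) :
    0 ≤ bridgeSignW pm p0 p1 n k :=
  Finset.sum_nonneg fun w _ => walkWeight_nonneg hpm hp0 hp1 w

lemma summable_bridgeSignW (hpm : 0 ≤ pm) (hp0 : 0 ≤ p0) (hp1 : 0 ≤ p1)
    (hz : |z| * (pm + p0 + p1) < 1) (hu : |u| ≤ 1) :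
    Summable fun p : ℕ × ℕ => bridgeSignW pm p0 p1 p.1 p.2 * z ^ p.1 * u ^ p.2 := by
  have hrow (n : ℕ) : HasSum (fun k => bridgeSignW pm p0 p1 n k * |z| ^ n * |u| ^ k)
      (markedBridgeW pm p0 p1 |u| n * |z| ^ n) := by
    simpa only [mul_right_comm] using (hasSum_bridgeSignW pm p0 p1 |u| n).mul_right (|z| ^ n)
  obtain ⟨_, -, -, -, hB⟩ :=
    exists_hasSum_posExcW_markedBridgeW hpm hp0 hp1 (by rwa [abs_abs] : |(|z|)| * _ < 1)
  refine .of_abs ?_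
  simp only [abs_mul, abs_pow, abs_of_nonneg (bridgeSignW_nonneg hpm hp0 hp1 _ _)]
  refine (summable_prod_of_nonneg fun p => ?_).2 ⟨fun n => (hrow n).summable, ?_⟩
  · have := bridgeSignW_nonneg hpm hp0 hp1 p.1 p.2
    simp only [Pi.zero_apply]
    positivity
  · simpa only [(hrow _).tsum_eq] using (hB |u| (by rwa [abs_abs])).summable

end Bridges

theorem bridges_sign_changes_gf_general {pm p0 p1 z u : ℝ}
    (hpm : 0 ≤ pm) (hp0 : 0 ≤ p0) (hp1 : 0 ≤ p1)
    (hz : |z| * (pm + p0 + p1) < 1) (hu : |u| ≤ 1) :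
    let E : ℝ := ∑' n : ℕ, posExcW pm p0 p1 n * z ^ n
    let C : ℝ := 1 / (1 - p0 * z)
    let E₁ : ℝ := E / C - 1
    Summable (fun n : ℕ => posExcW pm p0 p1 n * z ^ n) ∧
    0 ≤ E₁ ∧ E₁ < 1 ∧
    Summable (fun p : ℕ × ℕ => bridgeSignW pm p0 p1 p.1 p.2 * z ^ p.1 * u ^ p.2) ∧
    (∑' n : ℕ, z ^ n * ∑' k : ℕ, bridgeSignW pm p0 p1 n k * u ^ k) =
      C * (1 + 2 * E₁ / (1 - u * E₁)) := by
  intro E C E₁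
  obtain ⟨a, ha, hsmall, hE, hB⟩ := exists_hasSum_posExcW_markedBridgeW hpm hp0 hp1 hz
  have hD : 0 < 1 - p0 * z - a := by linarith
  have hE₁ : E₁ = a / (1 - p0 * z - a) := by
    simp only [E₁, E, C, hE.tsum_eq]
    field_simp
    ring
  have hquot : 2 * E₁ / (1 - u * E₁) = 2 * a / (1 - p0 * z - a - u * a) := by
    rw [hE₁, ← mul_div_assoc, ← mul_div_assoc, one_sub_div hD.ne', div_div_div_cancel_right₀ hD.ne']
  refine ⟨hE.summable, ?_, ?_, summable_bridgeSignW hpm hp0 hp1 hz hu, ?_⟩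
  · exact hE₁ ▸ div_nonneg ha hD.le
  · rw [hE₁, div_lt_one hD]
    linarith
  · simp only [(hasSum_bridgeSignW pm p0 p1 u _).tsum_eq, mul_comm (z ^ _), (hB u hu).tsum_eq,
      hquot, C]

/-- **Bivariate generating function of bridges by sign changes**:
`B(z,u) = C(z)(1 + 2E₁(z)/(1 - uE₁(z)))`. -/
theorem bridges_sign_changes_gf (pm p0 p1 : ℝ)
    (hpm : 0 < pm) (hp0 : 0 < p0) (hp1 : 0 < p1) :
    let P1 : ℝ := pm + p0 + p1
    let E : ℝ → ℝ := fun z => ∑' n : ℕ, posExcW pm p0 p1 n * z ^ n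
    let C : ℝ → ℝ := fun z => 1 / (1 - p0 * z)
    let E₁ : ℝ → ℝ := fun z => E z / C z - 1
    ∀ z : ℝ, 0 < z → z < 1 / P1 → ∀ u : ℝ, 0 ≤ u → u ≤ 1 →
      Summable (fun n : ℕ => posExcW pm p0 p1 n * z ^ n) ∧
      0 ≤ u * E₁ z ∧ u * E₁ z < 1 ∧
      Summable (fun p : ℕ × ℕ => bridgeSignW pm p0 p1 p.1 p.2 * z ^ p.1 * u ^ p.2) ∧
      (∑' n : ℕ, z ^ n * ∑' k : ℕ, bridgeSignW pm p0 p1 n k * u ^ k) =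
        C z * (1 + 2 * E₁ z / (1 - u * E₁ z)) := by
  intro P1 E C E₁ z hz hzP u hu0 hu1
  have hP1 : 0 < P1 := by positivity
  obtain ⟨hE, hE₁_nonneg, hE₁_lt, hB, hsum⟩ := bridges_sign_changes_gf_general hpm.le hp0.le hp1.le
    (by rwa [abs_of_pos hz, ← lt_div_iff₀ hP1]) (by rwa [abs_of_nonneg hu0])
  exact ⟨hE, mul_nonneg hu0 hE₁_nonneg, mul_lt_one_of_nonneg_of_lt_one_right hu1 hE₁_nonneg hE₁_lt,
    hB, hsum⟩
end

section
/- Fix positive reals p₋₁, p₀, p₁ and let P(1) = p₋₁ + p₀ + p₁. A positive bridge is a bridge that is not a chain and whose last nonzero partial sum is positive (ω_j > 0 for j = max{l : ω_l ≠ 0}); a negative bridge is defined with ω_j < 0 instead. Let b⁺_{n,k} and b⁻_{n,k} denote the total weights of positive, respectively negative, bridges of length n with exactly k sign changes, and b_{n,k} the total weight of all bridges of length n with k sign changes. Then: (1) b⁺_{n,k} = b⁻_{n,k} = (b_{n,k} − χ_{n,k})/2 for all n, k, where χ_{n,0} = p₀ⁿ and χ_{n,k} = 0 for k ≥ 1;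 and (2) for all real z with 0 < z < 1/P(1) and all real u with 0 ≤ u ≤ 1, Σ_{n,k} b⁺_{n,k} zⁿ u^k = (E(z) − C(z))/(1 − u·E₁(z)), where C(z) = 1/(1−p₀z), E(z) = Σ_n e_n zⁿ is the generating function of positive excursions, and E₁(z) = E(z)/C(z) − 1. -/
open scoped BigOperators Classical

/-! Cut a positive bridge just before the first time with positive height after which it stays
nonnegative. This writes it uniquely as a bridge that is not positive, that is, a chain or a
negative bridge, followed by an excursion whose first step is up. The excursion creates one new
sign change if the first part is a negative bridge and none if it is a chain. Reflection preserves
the weight of a bridge, because a bridge has as many up steps as down steps; hence `b⁻ = b⁺` and,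
writing `M` for the generating function of the excursions whose first step is up,
`∑ₙ b⁺ₙ,ₖ zⁿ = C(z) M(z) M(z)ᵏ`. The positive excursions are the chains and the positive bridges
without sign change, so that `E = C + C M`, that is, `E₁ = M`. All walks of length `n` together
have absolute weight `(|p₋₁| + |p₀| + |p₁|)ⁿ`, which justifies summing over `k` as well. -/

namespace MotzkinWalk

section Heights

variable {f g : ℕ → ℤ} {i i' j j' n : ℕ}

/-- The last nonzero value among `f 0, …, f n` exists and is positive. That it is negative is
expressed as `EndsPos (-f) n`. -/
def EndsPos (f : ℕ → ℤ) (n : ℕ) : Prop :=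
  ∃ j ∈ Finset.range (n + 1), 0 < f j ∧ ∀ l ∈ Finset.Ioc j n, f l = 0

/-- The pairs counted by `signChanges`, for an arbitrary sequence of heights. -/
def signChangePairs (f : ℕ → ℤ) (n : ℕ) : Finset (ℕ × ℕ) :=
  (Finset.range (n + 1) ×ˢ Finset.range (n + 1)).filter
    fun p => p.1 < p.2 ∧ f p.1 * f p.2 < 0 ∧ ∀ l ∈ Finset.Ioo p.1 p.2, f l = 0

/-- The number of sign changes of `f 0, …, f n`, where a positive value following `f n` is also
taken into account. -/
noncomputable def signChangesBeforeUp (f : ℕ → ℤ) (n : ℕ) : ℕ :=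
  (signChangePairs f n).card + if EndsPos (-f) n then 1 else 0

/-- The heights `f 0, …, f n` form a positive excursion whose first step is up, provided that
`f 0 = 0`. -/
structure IsUpExcursion (f : ℕ → ℤ) (n : ℕ) : Prop where
  length_pos : 0 < n
  first_eq : f 1 = 1
  last_eq : f n = 0
  nonneg : ∀ l ≤ n, 0 ≤ f l

/-- The heights `f 0, …, f (i + j)` split at time `i` into a bridge that is not positive and an
excursion of length `j` whose first step is up. -/
structure SplitsAt (f : ℕ → ℤ) (i j : ℕ) : Prop where
  eq_zero : f i = 0
  not_endsPos : ¬EndsPos f i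
  isUpExcursion : IsUpExcursion (fun l => f (i + l)) j

theorem endsPos_iff :
    EndsPos f n ↔ ∃ j ≤ n, 0 < f j ∧ ∀ l, j < l → l ≤ n → f l = 0 := by
  simp [EndsPos]

theorem endsPos_congr (h : ∀ l ≤ n, f l = g l) : EndsPos f n ↔ EndsPos g n := by
  rw [endsPos_iff, endsPos_iff]
  exact exists_congr fun j => and_congr_right fun hj =>
    and_congr (by rw [h j hj]) (forall_congr' fun l => imp_congr_right fun _ =>
      forall_congr' fun hl => by rw [h l hl])

theorem EndsPos.not_endsPos_neg (h : EndsPos f n) : ¬EndsPos (-f) n := by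
  rw [endsPos_iff] at h ⊢
  rintro ⟨b, hb, hneg, hb0⟩
  obtain ⟨a, ha, hpos, ha0⟩ := h
  simp only [Pi.neg_apply, neg_eq_zero] at hneg hb0
  rcases lt_trichotomy a b with hab | rfl | hab
  · have := ha0 b hab hb
    omega
  · omega
  · have := hb0 a hab ha
    omega

theorem not_endsPos_of_forall_nonpos (h : ∀ l ≤ n, f l ≤ 0) : ¬EndsPos f n := by
  rw [endsPos_iff]
  rintro ⟨j, hj, hpos, -⟩
  exact hpos.not_ge (h j hj)

theorem endsPos_or_endsPos_neg_or_eq_zero (f : ℕ → ℤ) (n : ℕ) :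
    EndsPos f n ∨ EndsPos (-f) n ∨ ∀ l ≤ n, f l = 0 := by
  by_cases hzero : ∀ l ≤ n, f l = 0
  · exact Or.inr (Or.inr hzero)
  push Not at hzero
  obtain ⟨m, hmn, hm⟩ := hzero
  have hlast : f (Nat.findGreatest (f · ≠ 0) n) ≠ 0 := Nat.findGreatest_spec (P := (f · ≠ 0)) hmn hm
  have hafter : ∀ l, Nat.findGreatest (f · ≠ 0) n < l → l ≤ n → f l = 0 := fun l hl hln =>
    not_not.1 (Nat.findGreatest_is_greatest hl hln)
  simp only [endsPos_iff, Pi.neg_apply, neg_eq_zero, Left.neg_pos_iff]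
  rcases hlast.lt_or_gt with hneg | hpos
  · exact Or.inr (Or.inl ⟨_, Nat.findGreatest_le n, hneg, hafter⟩)
  · exact Or.inl ⟨_, Nat.findGreatest_le n, hpos, hafter⟩

theorem mem_signChangePairs {a b : ℕ} :
    (a, b) ∈ signChangePairs f n ↔
      a < b ∧ b ≤ n ∧ f a * f b < 0 ∧ ∀ l, a < l → l < b → f l = 0 := by
  simp only [signChangePairs, Finset.mem_filter, Finset.mem_product, Finset.mem_range,
    Finset.mem_Ioo]
  grind

theorem signChangePairs_congr (h : ∀ l ≤ n, f l = g l) :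
    signChangePairs f n = signChangePairs g n := by
  ext ⟨a, b⟩
  rw [mem_signChangePairs, mem_signChangePairs]
  grind

theorem signChangePairs_neg : signChangePairs (-f) n = signChangePairs f n := by
  simp [signChangePairs]

theorem signChangePairs_eq_empty (h : ∀ l ≤ n, 0 ≤ f l) : signChangePairs f n = ∅ := by
  refine Finset.eq_empty_of_forall_notMem fun ⟨a, b⟩ hab => ?_
  obtain ⟨hab, hb, hneg, -⟩ := mem_signChangePairs.1 hab
  exact hneg.not_ge (mul_nonneg (h a (hab.le.trans hb)) (h b hb))

theorem signChangesBeforeUp_congr (h : ∀ l ≤ n, f l = g l) :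
    signChangesBeforeUp f n = signChangesBeforeUp g n := by
  have hneg : EndsPos (-f) n ↔ EndsPos (-g) n :=
    endsPos_congr fun l hl => congrArg Neg.neg (h l hl)
  rw [signChangesBeforeUp, signChangesBeforeUp, signChangePairs_congr h]
  simp only [hneg]

theorem signChangesBeforeUp_eq_zero_iff (hpos : ¬EndsPos f n) :
    signChangesBeforeUp f n = 0 ↔ ∀ l ≤ n, f l = 0 := by
  rw [signChangesBeforeUp]
  constructor
  · intro hcount
    have hneg : ¬EndsPos (-f) n := fun hneg => by simp [hneg] at hcount
    simpa [hpos, hneg] using endsPos_or_endsPos_neg_or_eq_zero f n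
  · intro hzero
    have hneg : ¬EndsPos (-f) n := not_endsPos_of_forall_nonpos fun l hl => by simp [hzero l hl]
    simp [hneg, signChangePairs_eq_empty fun l hl => (hzero l hl).ge]

theorem SplitsAt.nonneg (h : SplitsAt f i j) {l : ℕ} (hil : i ≤ l) (hlj : l ≤ i + j) :
    0 ≤ f l := by
  obtain ⟨m, rfl⟩ := Nat.exists_eq_add_of_le hil
  exact h.isUpExcursion.nonneg m (by omega)

theorem SplitsAt.not_endsPos_neg (h : SplitsAt f i j) {m : ℕ} (him : i < m) (hmj : m ≤ i + j) :
    ¬EndsPos (-f) m := by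
  have hup : f (i + 1) = 1 := h.isUpExcursion.first_eq
  rw [endsPos_iff]
  rintro ⟨a, ha, hneg, hzero⟩
  simp only [Pi.neg_apply, neg_eq_zero, Left.neg_pos_iff] at hneg hzero
  have hai : a < i := by
    by_contra! hia
    exact hneg.not_ge (h.nonneg hia (ha.trans hmj))
  have := hzero (i + 1) (by omega) him
  omega

theorem SplitsAt.endsPos (h : SplitsAt f i j) {m : ℕ} (him : i < m) (hmj : m ≤ i + j) :
    EndsPos f m := by
  have hup : f (i + 1) = 1 := h.isUpExcursion.first_eq
  rcases endsPos_or_endsPos_neg_or_eq_zero f m with hpos | hneg | hzero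
  · exact hpos
  · exact absurd hneg (h.not_endsPos_neg him hmj)
  · have := hzero (i + 1) him
    omega

theorem SplitsAt.left_unique (h : SplitsAt f i j) (h' : SplitsAt f i' j')
    (heq : i + j = i' + j') : i = i' := by
  by_contra hne
  rcases Nat.lt_or_gt_of_ne hne with hlt | hlt
  · exact h'.not_endsPos (h.endsPos hlt (by omega))
  · exact h.not_endsPos (h'.endsPos hlt (by omega))

theorem EndsPos.exists_splitsAt (h : EndsPos f n) (hstep : ∀ l, f (l + 1) ≤ f l + 1)
    (hzero : f 0 = 0) (hend : f n = 0) : ∃ i j, i + j = n ∧ SplitsAt f i j := by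
  have hexists : ∃ t, t ≤ n ∧ 0 < f t ∧ ∀ l, t ≤ l → l ≤ n → 0 ≤ f l := by
    obtain ⟨t, ht, hpos, hafter⟩ := endsPos_iff.1 h
    refine ⟨t, ht, hpos, fun l htl hln => ?_⟩
    rcases htl.eq_or_lt with rfl | htl
    exacts [hpos.le, (hafter l htl hln).ge]
  have hmin := fun {t} => Nat.find_min (m := t) hexists
  obtain ⟨htn, hpos, hnonneg⟩ := Nat.find_spec hexists
  obtain ⟨i, hi⟩ : ∃ i, Nat.find hexists = i + 1 :=
    Nat.exists_eq_succ_of_ne_zero fun h0 => by simp [h0, hzero] at hpos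
  rw [hi] at htn hpos hnonneg hmin
  have hfi : f i ≤ 0 := by
    by_contra! hfi
    refine hmin (Nat.lt_succ_self i) ⟨by omega, hfi, fun l hil hln => ?_⟩
    rcases hil.eq_or_lt with rfl | hil
    exacts [hfi.le, hnonneg l hil hln]
  have hfi_eq : f i = 0 := by linarith [hstep i]
  have hnot : ¬EndsPos f i := by
    rw [endsPos_iff]
    rintro ⟨a, hai, hposa, hafter⟩
    refine hmin (Nat.lt_succ_of_le hai) ⟨by omega, hposa, fun l hal hln => ?_⟩
    rcases Nat.lt_or_ge i l with hil | hli
    · exact hnonneg l hil hln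
    · rcases hal.eq_or_lt with rfl | hal
      exacts [hposa.le, (hafter l hal hli).ge]
  refine ⟨i, n - i, by omega, hfi_eq, hnot, by omega, by linarith [hstep i], ?_, fun l hl => ?_⟩
  · simpa [show i + (n - i) = n by omega] using hend
  · rcases l.eq_zero_or_pos with rfl | hl0
    exacts [hfi_eq.ge, hnonneg (i + l) (by omega) (by omega)]

theorem SplitsAt.mem_signChangePairs_iff (h : SplitsAt f i j) {a b : ℕ} :
    (a, b) ∈ signChangePairs f (i + j) ↔ (a, b) ∈ signChangePairs f i ∨
      b = i + 1 ∧ a ≤ i ∧ f a < 0 ∧ ∀ l, a < l → l ≤ i → f l = 0 := by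
  have hpos : 0 < j := h.isUpExcursion.length_pos
  have hup : f (i + 1) = 1 := h.isUpExcursion.first_eq
  rw [mem_signChangePairs, mem_signChangePairs]
  constructor
  · rintro ⟨hab, hb, hneg, hzero⟩
    rcases Nat.lt_or_ge i b with hib | hbi
    · have hfb : 0 ≤ f b := h.nonneg hib.le hb
      have hfa : f a < 0 := neg_of_mul_neg_left hneg hfb
      have hai : a < i := by
        by_contra! hia
        exact hfa.not_ge (h.nonneg hia (hab.le.trans hb))
      have hbi : b = i + 1 := by
        by_contra hne
        have := hzero (i + 1) (by omega) (by omega)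
        omega
      exact Or.inr ⟨hbi, hai.le, hfa, fun l hal hli => hzero l hal (by omega)⟩
    · exact Or.inl ⟨hab, hbi, hneg, hzero⟩
  · rintro (⟨hab, hb, hneg, hzero⟩ | ⟨rfl, hai, hneg, hzero⟩)
    · exact ⟨hab, by omega, hneg, hzero⟩
    · exact ⟨by omega, by omega, by rwa [hup, mul_one],
        fun l hal hli => hzero l hal (Nat.lt_succ_iff.1 hli)⟩

theorem SplitsAt.card_signChangePairs (h : SplitsAt f i j) :
    (signChangePairs f (i + j)).card = signChangesBeforeUp f i := by
  have hmem := fun {a b} => h.mem_signChangePairs_iff (a := a) (b := b)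
  have hneg : EndsPos (-f) i ↔ ∃ a ≤ i, f a < 0 ∧ ∀ l, a < l → l ≤ i → f l = 0 := by
    simp [endsPos_iff]
  rw [signChangesBeforeUp]
  split_ifs with hend
  · obtain ⟨a, hai, hfa, hzero⟩ := hneg.1 hend
    have hnew : (a, i + 1) ∉ signChangePairs f i := by
      simp [mem_signChangePairs]
    have hinsert : signChangePairs f (i + j) = insert (a, i + 1) (signChangePairs f i) := by
      ext ⟨c, d⟩
      rw [hmem, Finset.mem_insert, Prod.mk.injEq]
      grind
    rw [hinsert, Finset.card_insert_of_notMem hnew]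
  · have heq : signChangePairs f (i + j) = signChangePairs f i := by
      ext ⟨c, d⟩
      rw [hmem]
      grind
    rw [heq, add_zero]

end Heights

section Walks

variable {m n : ℕ}

theorem psum_zero (w : Fin n → Fin 3) : psum w 0 = 0 := by
  simp [psum]

theorem psum_succ (w : Fin n → Fin 3) (i : Fin n) :
    psum w (i + 1) = psum w i + stepVal (w i) := by
  have hinsert : Finset.univ.filter (fun l : Fin n => (l : ℕ) < i + 1) =
      insert i (Finset.univ.filter fun l : Fin n => (l : ℕ) < i) := by
    ext l
    simp [Fin.ext_iff, le_iff_eq_or_lt]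
  rw [psum, hinsert, Finset.sum_insert (by simp), add_comm, psum]

theorem psum_of_le (w : Fin n → Fin 3) {l : ℕ} (h : n ≤ l) : psum w l = psum w n := by
  simp [psum, fun i : Fin n => i.2.trans_le h]

theorem psum_succ_le (w : Fin n → Fin 3) (l : ℕ) : psum w (l + 1) ≤ psum w l + 1 := by
  have hstep : ∀ s, stepVal s ≤ 1 := by decide
  rcases Nat.lt_or_ge l n with h | h
  · linarith [psum_succ w ⟨l, h⟩, hstep (w ⟨l, h⟩)]
  · rw [psum_of_le w h, psum_of_le w (h.trans l.le_succ)]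
    omega

theorem psum_castAdd (w : Fin (m + n) → Fin 3) {l : ℕ} (h : l ≤ m) :
    psum (fun i => w (Fin.castAdd n i)) l = psum w l := by
  simp [psum, Finset.sum_filter, Fin.sum_univ_add,
    fun i : Fin n => (h.trans (m.le_add_right i)).not_gt]

theorem psum_natAdd (w : Fin (m + n) → Fin 3) (l : ℕ) :
    psum (fun i => w (Fin.natAdd m i)) l = psum w (m + l) - psum w m := by
  simp [psum, Finset.sum_filter, Fin.sum_univ_add,
    fun i : Fin m => i.2.trans_le (m.le_add_right l)]

theorem psum_chain (n l : ℕ) : psum (fun _ : Fin n => 1) l = 0 := by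
  simp [psum, stepVal]

theorem forall_psum_eq_zero_iff (w : Fin n → Fin 3) :
    (∀ l ≤ n, psum w l = 0) ↔ w = fun _ => 1 := by
  have hstep : ∀ s, stepVal s = 0 ↔ s = 1 := by decide
  constructor
  · refine fun h => funext fun i => (hstep _).1 ?_
    linarith [psum_succ w i, h i i.2.le, h (i + 1) i.2]
  · rintro rfl l -
    exact psum_chain n l

/-- Reflection of a walk in the horizontal axis. -/
def reflect (w : Fin n → Fin 3) : Fin n → Fin 3 := fun i => (w i).rev

theorem reflect_involutive : Function.Involutive (reflect (n := n)) := fun w => by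
  funext i
  simp [reflect]

theorem psum_reflect (w : Fin n → Fin 3) : psum (reflect w) = -psum w := by
  have hstep : ∀ s : Fin 3, stepVal s.rev = -stepVal s := by decide
  funext l
  simp [psum, reflect, hstep]

theorem isPosBridge_iff (w : Fin n → Fin 3) :
    IsPosBridge w ↔ psum w n = 0 ∧ EndsPos (psum w) n :=
  Iff.rfl

theorem isNegBridge_iff (w : Fin n → Fin 3) :
    IsNegBridge w ↔ psum w n = 0 ∧ EndsPos (-psum w) n := by
  simp [IsNegBridge, EndsPos]

theorem signChanges_eq (w : Fin n → Fin 3) :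
    signChanges w = (signChangePairs (psum w) n).card :=
  rfl

theorem isNegBridge_iff_isPosBridge_reflect (w : Fin n → Fin 3) :
    IsNegBridge w ↔ IsPosBridge (reflect w) := by
  simp [isNegBridge_iff, isPosBridge_iff, psum_reflect]

theorem signChanges_reflect (w : Fin n → Fin 3) : signChanges (reflect w) = signChanges w := by
  rw [signChanges_eq, psum_reflect, signChangePairs_neg, signChanges_eq]

theorem signChanges_eq_zero_of_nonneg {w : Fin n → Fin 3} (h : ∀ l ≤ n, 0 ≤ psum w l) :
    signChanges w = 0 := by
  rw [signChanges_eq, signChangePairs_eq_empty h, Finset.card_empty]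

theorem not_isPosBridge_of_nonpos {w : Fin n → Fin 3} (h : ∀ l ≤ n, psum w l ≤ 0) :
    ¬IsPosBridge w := fun hpos =>
  not_endsPos_of_forall_nonpos h hpos.2

theorem not_isNegBridge_of_nonneg {w : Fin n → Fin 3} (h : ∀ l ≤ n, 0 ≤ psum w l) :
    ¬IsNegBridge w := by
  rw [isNegBridge_iff_isPosBridge_reflect]
  exact not_isPosBridge_of_nonpos fun l hl => by simpa [psum_reflect] using h l hl

theorem bridge_trichotomy {w : Fin n → Fin 3} (hw : psum w n = 0) :
    (IsPosBridge w ∧ ¬IsNegBridge w ∧ w ≠ fun _ => 1) ∨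
      (¬IsPosBridge w ∧ IsNegBridge w ∧ w ≠ fun _ => 1) ∨
      (¬IsPosBridge w ∧ ¬IsNegBridge w ∧ w = fun _ => 1) := by
  have hchain : (w = fun _ => 1) → ¬IsPosBridge w ∧ ¬IsNegBridge w := by
    rintro rfl
    exact ⟨not_isPosBridge_of_nonpos fun l _ => (psum_chain n l).le,
      not_isNegBridge_of_nonneg fun l _ => (psum_chain n l).ge⟩
  have hposneg : IsPosBridge w → ¬IsNegBridge w := fun hpos hneg =>
    EndsPos.not_endsPos_neg hpos.2 ((isNegBridge_iff w).1 hneg).2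
  have hcover : IsPosBridge w ∨ IsNegBridge w ∨ w = fun _ => 1 := by
    simpa only [isPosBridge_iff, isNegBridge_iff, hw, true_and, forall_psum_eq_zero_iff] using
      endsPos_or_endsPos_neg_or_eq_zero (psum w) n
  tauto

variable (pm p0 p1 : ℝ)

theorem walkWeight_eq_pow_count (w : Fin n → Fin 3) :
    walkWeight pm p0 p1 w = pm ^ (Finset.univ.filter (w · = 0)).card *
      p0 ^ (Finset.univ.filter (w · = 1)).card * p1 ^ (Finset.univ.filter (w · = 2)).card := by
  rw [walkWeight, ← Finset.prod_fiberwise' Finset.univ w (stepWeight pm p0 p1)]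
  simp [Finset.prod_const, Fin.prod_univ_three, stepWeight]

theorem psum_eq_count_sub_count (w : Fin n → Fin 3) :
    psum w n = (Finset.univ.filter (w · = 2)).card - (Finset.univ.filter (w · = 0)).card := by
  have hall : psum w n = ∑ i, stepVal (w i) := by
    simp [psum]
  rw [hall, ← Finset.sum_fiberwise' Finset.univ w stepVal]
  simp [Fin.sum_univ_three, stepVal]
  ring

theorem walkWeight_reflect {w : Fin n → Fin 3} (hw : psum w n = 0) :
    walkWeight pm p0 p1 (reflect w) = walkWeight pm p0 p1 w := by
  have hcount : (Finset.univ.filter (w · = 2)).card = (Finset.univ.filter (w · = 0)).card := by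
    have := psum_eq_count_sub_count w
    omega
  have hrev : ∀ s : Fin 3, (s.rev = 0 ↔ s = 2) ∧ (s.rev = 1 ↔ s = 1) ∧ (s.rev = 2 ↔ s = 0) := by
    decide
  simp only [walkWeight_eq_pow_count, reflect, hrev, hcount]

theorem walkWeight_chain (n : ℕ) : walkWeight pm p0 p1 (fun _ : Fin n => 1) = p0 ^ n := by
  simp [walkWeight, stepWeight]

theorem walkWeight_append (w : Fin (m + n) → Fin 3) :
    walkWeight pm p0 p1 w = walkWeight pm p0 p1 (fun i => w (Fin.castAdd n i)) *
      walkWeight pm p0 p1 (fun i => w (Fin.natAdd m i)) :=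
  Fin.prod_univ_add _

theorem sum_walkWeight_mul_sum_walkWeight (A : (Fin m → Fin 3) → Prop)
    (B : (Fin n → Fin 3) → Prop) :
    (∑ u with A u, walkWeight pm p0 p1 u) * ∑ v with B v, walkWeight pm p0 p1 v =
      ∑ w : Fin (m + n) → Fin 3 with
        A (fun i => w (Fin.castAdd n i)) ∧ B (fun i => w (Fin.natAdd m i)),
        walkWeight pm p0 p1 w := by
  rw [Finset.sum_mul_sum, ← Finset.sum_product']
  refine Finset.sum_equiv (Fin.appendEquiv m n) (fun p => ?_) fun p _ => ?_
  · simp [Fin.appendEquiv]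
  · simp [walkWeight_append, Fin.appendEquiv]

theorem sum_abs_walkWeight (n : ℕ) :
    ∑ w : Fin n → Fin 3, |walkWeight pm p0 p1 w| = (|pm| + |p0| + |p1|) ^ n := by
  have hsum : |pm| + |p0| + |p1| = ∑ s, |stepWeight pm p0 p1 s| := by
    simp [Fin.sum_univ_three, stepWeight]
  simp only [hsum, Fintype.sum_pow, walkWeight, Finset.abs_prod]

end Walks

section Decomposition

open Finset.HasAntidiagonal (antidiagonal mem_antidiagonal)

variable {m n : ℕ} (pm p0 p1 : ℝ)

/-- Total weight of the positive excursions of length `n` whose first step is up. -/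
noncomputable def upExcW (n : ℕ) : ℝ :=
  ∑ w : Fin n → Fin 3 with IsUpExcursion (psum w) n, walkWeight pm p0 p1 w

/-- The bridges, other than positive ones, that acquire `k` sign changes when an up step is
appended: the possible beginnings of a positive bridge with `k` sign changes. -/
def IsBeginning (w : Fin n → Fin 3) (k : ℕ) : Prop :=
  psum w n = 0 ∧ ¬EndsPos (psum w) n ∧ signChangesBeforeUp (psum w) n = k

theorem isBeginning_zero_iff (w : Fin n → Fin 3) : IsBeginning w 0 ↔ w = fun _ => 1 := by
  rw [IsBeginning, ← forall_psum_eq_zero_iff]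
  constructor
  · rintro ⟨-, hpos, hcount⟩
    exact (signChangesBeforeUp_eq_zero_iff hpos).1 hcount
  · intro hzero
    have hpos : ¬EndsPos (psum w) n := not_endsPos_of_forall_nonpos fun l hl => (hzero l hl).le
    exact ⟨hzero n le_rfl, hpos, (signChangesBeforeUp_eq_zero_iff hpos).2 hzero⟩

theorem isBeginning_succ_iff (w : Fin n → Fin 3) (k : ℕ) :
    IsBeginning w (k + 1) ↔ IsNegBridge w ∧ signChanges w = k := by
  rw [IsBeginning, signChangesBeforeUp, isNegBridge_iff, signChanges_eq]
  rcases endsPos_or_endsPos_neg_or_eq_zero (psum w) n with hpos | hneg | hzero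
  · simp [hpos, hpos.not_endsPos_neg]
  · have hpos : ¬EndsPos (psum w) n := fun hpos => hpos.not_endsPos_neg hneg
    simp [hpos, hneg]
  · have hneg : ¬EndsPos (-psum w) n := not_endsPos_of_forall_nonpos fun l hl => by
      simp [hzero l hl]
    simp [hneg, signChangePairs_eq_empty fun l hl => (hzero l hl).ge]

theorem sum_chain_walkWeight (n : ℕ) :
    ∑ w : Fin n → Fin 3 with w = fun _ => 1, walkWeight pm p0 p1 w = p0 ^ n := by
  simp [Finset.filter_eq', walkWeight_chain]

theorem splitsAt_psum_iff (w : Fin (m + n) → Fin 3) (k : ℕ) :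
    SplitsAt (psum w) m n ∧ signChangesBeforeUp (psum w) m = k ↔
      IsBeginning (fun i => w (Fin.castAdd n i)) k ∧
        IsUpExcursion (psum fun i => w (Fin.natAdd m i)) n := by
  have hprefix := fun l (hl : l ≤ m) => psum_castAdd w hl
  rw [IsBeginning, psum_castAdd w le_rfl, endsPos_congr hprefix,
    signChangesBeforeUp_congr hprefix]
  have hsuffix : psum w m = 0 →
      (psum fun i => w (Fin.natAdd m i)) = fun l => psum w (m + l) := fun h => by
    funext l
    rw [psum_natAdd, h, sub_zero]
  constructor
  · rintro ⟨⟨h0, hnot, hup⟩, hk⟩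
    exact ⟨⟨h0, hnot, hk⟩, hsuffix h0 ▸ hup⟩
  · rintro ⟨⟨h0, hnot, hk⟩, hup⟩
    exact ⟨⟨h0, hnot, hsuffix h0 ▸ hup⟩, hk⟩

theorem isPosBridge_and_signChanges_iff (w : Fin n → Fin 3) (k : ℕ) :
    IsPosBridge w ∧ signChanges w = k ↔ ∃ p ∈ antidiagonal n,
      SplitsAt (psum w) p.1 p.2 ∧ signChangesBeforeUp (psum w) p.1 = k := by
  simp only [mem_antidiagonal, isPosBridge_iff, signChanges_eq]
  constructor
  · rintro ⟨⟨hend, hpos⟩, hk⟩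
    obtain ⟨i, j, hij, hsplit⟩ := hpos.exists_splitsAt (psum_succ_le w) (psum_zero w) hend
    refine ⟨(i, j), hij, hsplit, ?_⟩
    rw [← hsplit.card_signChangePairs, hij, hk]
  · rintro ⟨⟨i, j⟩, rfl, hsplit, hk⟩
    have hpos : 0 < j := hsplit.isUpExcursion.length_pos
    exact ⟨⟨hsplit.isUpExcursion.last_eq, hsplit.endsPos (by omega) le_rfl⟩,
      hsplit.card_signChangePairs.trans hk⟩

theorem posBridgeSignW_eq_sum_antidiagonal (n k : ℕ) :
    posBridgeSignW pm p0 p1 n k = ∑ p ∈ antidiagonal n,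
      (∑ u : Fin p.1 → Fin 3 with IsBeginning u k, walkWeight pm p0 p1 u) *
        upExcW pm p0 p1 p.2 := by
  have hunion : (Finset.univ.filter fun w : Fin n → Fin 3 => IsPosBridge w ∧ signChanges w = k) =
      (antidiagonal n).biUnion fun p => Finset.univ.filter fun w : Fin n → Fin 3 =>
        SplitsAt (psum w) p.1 p.2 ∧ signChangesBeforeUp (psum w) p.1 = k := by
    ext w
    simp [isPosBridge_and_signChanges_iff]
  rw [posBridgeSignW, hunion, Finset.sum_biUnion]
  · refine Finset.sum_congr rfl fun ⟨i, j⟩ hij => ?_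
    obtain rfl := mem_antidiagonal.1 hij
    simp only [splitsAt_psum_iff]
    rw [upExcW, sum_walkWeight_mul_sum_walkWeight]
  · intro p hp q hq hpq
    rw [Function.onFun, Finset.disjoint_filter]
    rintro w - ⟨hsplit, -⟩ ⟨hsplit', -⟩
    exact hpq ((Finset.HasAntidiagonal.antidiagonal_congr hp hq).2 <| hsplit.left_unique hsplit' <|
      (mem_antidiagonal.1 hp).trans (mem_antidiagonal.1 hq).symm)

theorem posBridgeSignW_zero (n : ℕ) :
    posBridgeSignW pm p0 p1 n 0 =
      ∑ p ∈ antidiagonal n, p0 ^ p.1 * upExcW pm p0 p1 p.2 := by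
  simp only [posBridgeSignW_eq_sum_antidiagonal, isBeginning_zero_iff, sum_chain_walkWeight]

theorem negBridgeSignW_eq_posBridgeSignW (n k : ℕ) :
    negBridgeSignW pm p0 p1 n k = posBridgeSignW pm p0 p1 n k := by
  refine Finset.sum_equiv reflect_involutive.toPerm (fun w => ?_) fun w hw => ?_
  · simp [isNegBridge_iff_isPosBridge_reflect, signChanges_reflect]
  · exact (walkWeight_reflect pm p0 p1 (Finset.mem_filter.1 hw).2.1.1).symm

theorem posBridgeSignW_succ (n k : ℕ) :
    posBridgeSignW pm p0 p1 n (k + 1) =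
      ∑ p ∈ antidiagonal n, posBridgeSignW pm p0 p1 p.1 k * upExcW pm p0 p1 p.2 := by
  simp only [posBridgeSignW_eq_sum_antidiagonal _ _ _ n, isBeginning_succ_iff,
    ← negBridgeSignW_eq_posBridgeSignW]
  rfl

theorem bridgeSignW_eq_add (n k : ℕ) :
    bridgeSignW pm p0 p1 n k = posBridgeSignW pm p0 p1 n k + negBridgeSignW pm p0 p1 n k +
      if k = 0 then p0 ^ n else 0 := by
  have hchain : (if k = 0 then p0 ^ n else 0) =
      ∑ w : Fin n → Fin 3, if w = fun _ => 1 then if k = 0 then walkWeight pm p0 p1 w else 0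
        else 0 := by
    simp [walkWeight_chain]
  rw [hchain, bridgeSignW, posBridgeSignW, negBridgeSignW]
  simp only [Finset.sum_filter, ← Finset.sum_add_distrib]
  refine Finset.sum_congr rfl fun w _ => ?_
  by_cases hw : psum w n = 0
  · obtain ⟨hp, hn, hc⟩ | ⟨hp, hn, hc⟩ | ⟨hp, hn, rfl⟩ := bridge_trichotomy hw
    · simp [hw, hp, hn, hc]
    · simp [hw, hp, hn, hc]
    · simp [hw, hp, hn, signChanges_eq_zero_of_nonneg fun l _ => (psum_chain n l).ge, eq_comm]
  · have hp : ¬IsPosBridge w := fun h => hw h.1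
    have hn : ¬IsNegBridge w := fun h => hw h.1
    have hc : w ≠ fun _ => 1 := fun h => hw ((forall_psum_eq_zero_iff w).2 h n le_rfl)
    simp [hw, hp, hn, hc]

theorem isPosBridge_and_signChanges_eq_zero_iff (w : Fin n → Fin 3) :
    IsPosBridge w ∧ signChanges w = 0 ↔
      (psum w n = 0 ∧ ∀ l ∈ Finset.range (n + 1), 0 ≤ psum w l) ∧ w ≠ fun _ => 1 := by
  constructor
  · refine fun h => ⟨⟨h.1.1, fun l hl => ?_⟩, ?_⟩
    · obtain ⟨⟨i, j⟩, hij, hsplit, hcount⟩ := (isPosBridge_and_signChanges_iff w 0).1 h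
      have hprefix := (signChangesBeforeUp_eq_zero_iff hsplit.not_endsPos).1 hcount
      rcases le_total l i with hli | hil
      · exact (hprefix l hli).ge
      · refine hsplit.nonneg hil ?_
        rw [mem_antidiagonal.1 hij]
        exact Nat.lt_succ_iff.1 (Finset.mem_range.1 hl)
    · rintro rfl
      exact not_isPosBridge_of_nonpos (fun l _ => (psum_chain n l).le) h.1
  · rintro ⟨⟨hw, hnonneg⟩, hc⟩
    have hnonneg : ∀ l ≤ n, 0 ≤ psum w l := fun l hl =>
      hnonneg l (Finset.mem_range.2 (Nat.lt_succ_of_le hl))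
    have hneg := not_isNegBridge_of_nonneg hnonneg
    have hcases := bridge_trichotomy hw
    exact ⟨by tauto, signChanges_eq_zero_of_nonneg hnonneg⟩

theorem posExcW_eq_add (n : ℕ) :
    posExcW pm p0 p1 n = posBridgeSignW pm p0 p1 n 0 + p0 ^ n := by
  have herase : (Finset.univ.filter fun w : Fin n → Fin 3 => IsPosBridge w ∧ signChanges w = 0) =
      (Finset.univ.filter fun w : Fin n → Fin 3 =>
        psum w n = 0 ∧ ∀ l ∈ Finset.range (n + 1), 0 ≤ psum w l).erase fun _ => 1 := by
    ext w
    simp only [Finset.mem_filter_univ, Finset.mem_erase,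
      isPosBridge_and_signChanges_eq_zero_iff, and_comm]
  rw [posBridgeSignW, herase, ← walkWeight_chain pm p0 p1 n, Finset.sum_erase_add, posExcW]
  simp [psum_chain]

end Decomposition

section GeneratingFunctions

open Finset.HasAntidiagonal (antidiagonal mem_antidiagonal)

variable {𝕜 : Type*} [RCLike 𝕜]

theorem hasSum_antidiagonal_mul_pow {f g : ℕ → 𝕜} {z a b : 𝕜}
    (hf : HasSum (fun n => f n * z ^ n) a) (hg : HasSum (fun n => g n * z ^ n) b) :
    HasSum (fun n => (∑ p ∈ antidiagonal n, f p.1 * g p.2) * z ^ n) (a * b) := by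
  have hfn := hf.summable.norm
  have hgn := hg.summable.norm
  have hterm : ∀ n, (∑ p ∈ antidiagonal n, f p.1 * g p.2) * z ^ n =
      ∑ p ∈ antidiagonal n, f p.1 * z ^ p.1 * (g p.2 * z ^ p.2) := fun n => by
    rw [Finset.sum_mul]
    refine Finset.sum_congr rfl fun p hp => ?_
    rw [← mem_antidiagonal.1 hp, pow_add, mul_mul_mul_comm]
  simp only [hterm, ← hf.tsum_eq, ← hg.tsum_eq,
    tsum_mul_tsum_eq_tsum_sum_antidiagonal_of_summable_norm hfn hgn]
  exact (summable_norm_sum_mul_antidiagonal_of_summable_norm hfn hgn).of_norm.hasSum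

theorem eq_div_of_hasSum_geometric {a r s : 𝕜} (h : HasSum (fun k : ℕ => a * r ^ k) s) :
    s = a / (1 - r) := by
  rcases eq_or_ne a 0 with rfl | ha
  · simpa using h.unique (by simp)
  · have hr : ‖r‖ < 1 :=
      summable_geometric_iff_norm_lt_one.1 ((summable_mul_left_iff ha).1 h.summable)
    rw [div_eq_mul_inv]
    exact h.unique ((hasSum_geometric_of_norm_lt_one hr).mul_left a)

variable {pm p0 p1 : ℝ} {z : 𝕜}

theorem summable_sum_walkWeight_mul_pow_mul_pow (hz : (|pm| + |p0| + |p1|) * ‖z‖ < 1) {u : 𝕜}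
    (hu : ‖u‖ ≤ 1) (A : ∀ n, (Fin n → Fin 3) → Prop) (s : ∀ n, (Fin n → Fin 3) → ℕ) :
    Summable fun p : ℕ × ℕ =>
      ((∑ w with A p.1 w ∧ s p.1 w = p.2, walkWeight pm p0 p1 w : ℝ) : 𝕜) *
        z ^ p.1 * u ^ p.2 := by
  let b : ℕ × ℕ → ℝ := fun p =>
    (∑ w with s p.1 w = p.2, |walkWeight pm p0 p1 w|) * ‖z‖ ^ p.1
  have hb : ∀ p, 0 ≤ b p := fun p =>
    mul_nonneg (Finset.sum_nonneg fun _ _ => abs_nonneg _) (pow_nonneg (norm_nonneg z) _)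
  have hsum : ∀ n, HasSum (fun k => b (n, k)) (((|pm| + |p0| + |p1|) * ‖z‖) ^ n) := fun n => by
    have hsingle : ∀ w, HasSum (fun k => if s n w = k then |walkWeight pm p0 p1 w| else 0)
        |walkWeight pm p0 p1 w| := fun w => by
      simpa only [eq_comm] using hasSum_ite_eq (s n w) |walkWeight pm p0 p1 w|
    have hrow := (hasSum_sum (s := Finset.univ) fun w _ => hsingle w).mul_right (‖z‖ ^ n)
    rw [sum_abs_walkWeight, ← mul_pow] at hrow
    simpa only [b, Finset.sum_filter] using hrow
  refine Summable.of_norm_bounded (g := b) ?_ fun p => ?_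
  · rw [summable_prod_of_nonneg hb]
    refine ⟨fun n => (hsum n).summable, ?_⟩
    simp only [(hsum _).tsum_eq]
    exact summable_geometric_of_lt_one (by positivity) hz
  · have hle : |∑ w with A p.1 w ∧ s p.1 w = p.2, walkWeight pm p0 p1 w| ≤
        ∑ w with s p.1 w = p.2, |walkWeight pm p0 p1 w| :=
      (Finset.abs_sum_le_sum_abs _ _).trans <| Finset.sum_le_sum_of_subset_of_nonneg
        (Finset.monotone_filter_right _ fun _ _ h => h.2) fun _ _ _ => abs_nonneg _
    rw [norm_mul, norm_mul, norm_pow, norm_pow, RCLike.norm_ofReal]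
    exact (mul_le_of_le_one_right (by positivity) (pow_le_one₀ (norm_nonneg u) hu)).trans
      (mul_le_mul_of_nonneg_right hle (by positivity))

theorem summable_sum_walkWeight_mul_pow (hz : (|pm| + |p0| + |p1|) * ‖z‖ < 1)
    (A : ∀ n, (Fin n → Fin 3) → Prop) :
    Summable fun n => ((∑ w with A n w, walkWeight pm p0 p1 w : ℝ) : 𝕜) * z ^ n := by
  simpa [Function.comp_def] using
    (summable_sum_walkWeight_mul_pow_mul_pow hz (u := 0) (by simp) A fun _ _ => 0).comp_injective
      (Prod.mk_left_injective 0)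

theorem norm_ofReal_mul_lt_one (hz : (|pm| + |p0| + |p1|) * ‖z‖ < 1) : ‖(p0 : 𝕜) * z‖ < 1 := by
  rw [norm_mul, RCLike.norm_ofReal]
  refine lt_of_le_of_lt ?_ hz
  gcongr
  linarith [abs_nonneg pm, abs_nonneg p1]

theorem hasSum_chain (hz : (|pm| + |p0| + |p1|) * ‖z‖ < 1) :
    HasSum (fun n => ((p0 ^ n : ℝ) : 𝕜) * z ^ n) (1 / (1 - p0 * z)) := by
  simpa [mul_pow] using hasSum_geometric_of_norm_lt_one (norm_ofReal_mul_lt_one hz)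

theorem hasSum_posBridgeSignW (hz : (|pm| + |p0| + |p1|) * ‖z‖ < 1) {m : 𝕜}
    (hm : HasSum (fun n => (upExcW pm p0 p1 n : 𝕜) * z ^ n) m) (k : ℕ) :
    HasSum (fun n => (posBridgeSignW pm p0 p1 n k : 𝕜) * z ^ n)
      (1 / (1 - p0 * z) * m * m ^ k) := by
  induction k with
  | zero =>
    rw [pow_zero, mul_one]
    simpa [posBridgeSignW_zero] using hasSum_antidiagonal_mul_pow (hasSum_chain hz) hm
  | succ k ih =>
    rw [pow_succ, ← mul_assoc]
    simpa [posBridgeSignW_succ] using hasSum_antidiagonal_mul_pow ih hm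

theorem hasSum_posExcW (hz : (|pm| + |p0| + |p1|) * ‖z‖ < 1) {m : 𝕜}
    (hm : HasSum (fun n => (upExcW pm p0 p1 n : 𝕜) * z ^ n) m) :
    HasSum (fun n => (posExcW pm p0 p1 n : 𝕜) * z ^ n)
      (1 / (1 - p0 * z) * m + 1 / (1 - p0 * z)) := by
  simpa only [posExcW_eq_add, RCLike.ofReal_add, add_mul, pow_zero, mul_one] using
    (hasSum_posBridgeSignW hz hm 0).add (hasSum_chain hz)

theorem hasSum_posBridgeSignW_mul_pow_mul_pow (hz : (|pm| + |p0| + |p1|) * ‖z‖ < 1) {u m : 𝕜}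
    (hu : ‖u‖ ≤ 1) (hm : HasSum (fun n => (upExcW pm p0 p1 n : 𝕜) * z ^ n) m) :
    HasSum (fun p : ℕ × ℕ => (posBridgeSignW pm p0 p1 p.1 p.2 : 𝕜) * z ^ p.1 * u ^ p.2)
      (1 / (1 - p0 * z) * m / (1 - u * m)) := by
  have hsum : Summable fun p : ℕ × ℕ =>
      (posBridgeSignW pm p0 p1 p.1 p.2 : 𝕜) * z ^ p.1 * u ^ p.2 := by
    convert summable_sum_walkWeight_mul_pow_mul_pow hz hu (fun _ => IsPosBridge)
      fun _ => signChanges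
    rw [posBridgeSignW]
    congr!
  have hrows := ((Equiv.prodComm ℕ ℕ).hasSum_iff.2 hsum.hasSum).prod_fiberwise fun k =>
    (hasSum_posBridgeSignW hz hm k).mul_right (u ^ k)
  have hgeom := eq_div_of_hasSum_geometric (a := 1 / (1 - p0 * z) * m) (r := u * m) <| by
    simpa only [mul_pow, mul_assoc, mul_comm (m ^ _)] using hrows
  simpa only [hgeom, mul_assoc] using hsum.hasSum

end GeneratingFunctions

end MotzkinWalk

open MotzkinWalk in
theorem positive_bridges_general {𝕜 : Type*} [RCLike 𝕜] (pm p0 p1 : ℝ) :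
    let E : 𝕜 → 𝕜 := fun z => ∑' n : ℕ, (posExcW pm p0 p1 n : 𝕜) * z ^ n
    let C : 𝕜 → 𝕜 := fun z => 1 / (1 - p0 * z)
    let E₁ : 𝕜 → 𝕜 := fun z => E z / C z - 1
    (∀ n k : ℕ,
      posBridgeSignW pm p0 p1 n k = negBridgeSignW pm p0 p1 n k ∧
      posBridgeSignW pm p0 p1 n k =
        (bridgeSignW pm p0 p1 n k - (if k = 0 then p0 ^ n else 0)) / 2) ∧
    ∀ z : 𝕜, (|pm| + |p0| + |p1|) * ‖z‖ < 1 → ∀ u : 𝕜, ‖u‖ ≤ 1 →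
      Summable (fun n : ℕ => (posExcW pm p0 p1 n : 𝕜) * z ^ n) ∧
      HasSum (fun p : ℕ × ℕ => (posBridgeSignW pm p0 p1 p.1 p.2 : 𝕜) * z ^ p.1 * u ^ p.2)
        ((E z - C z) / (1 - u * E₁ z)) := by
  intro E C E₁
  refine ⟨fun n k => ⟨(negBridgeSignW_eq_posBridgeSignW pm p0 p1 n k).symm, ?_⟩,
    fun z hz u hu => ?_⟩
  · rw [bridgeSignW_eq_add, negBridgeSignW_eq_posBridgeSignW]
    ring
  · obtain ⟨m, hm⟩ : Summable fun n => (upExcW pm p0 p1 n : 𝕜) * z ^ n :=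
      summable_sum_walkWeight_mul_pow hz fun n w => IsUpExcursion (psum w) n
    have hexc := hasSum_posExcW hz hm
    have hE : E z = C z * m + C z := hexc.tsum_eq
    have hC : C z ≠ 0 := one_div_ne_zero <| sub_ne_zero.2 fun h => by
      simpa [← h] using norm_ofReal_mul_lt_one hz
    have hE₁ : E₁ z = m := by
      simp only [E₁, hE]
      field_simp
      ring
    refine ⟨hexc.summable, ?_⟩
    rw [hE₁, hE, add_sub_cancel_right]
    exact hasSum_posBridgeSignW_mul_pow_mul_pow hz hu hm

/-- **Positive bridges**: `b⁺_{n,k} = b⁻_{n,k} = (b_{n,k} - χ_{n,k})/2` and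
`B₊(z,u) = (E(z) - C(z))/(1 - uE₁(z))`. -/
theorem positive_bridges (pm p0 p1 : ℝ)
    (hpm : 0 < pm) (hp0 : 0 < p0) (hp1 : 0 < p1) :
    let P1 : ℝ := pm + p0 + p1
    let E : ℝ → ℝ := fun z => ∑' n : ℕ, posExcW pm p0 p1 n * z ^ n
    let C : ℝ → ℝ := fun z => 1 / (1 - p0 * z)
    let E₁ : ℝ → ℝ := fun z => E z / C z - 1
    (∀ n k : ℕ,
      posBridgeSignW pm p0 p1 n k = negBridgeSignW pm p0 p1 n k ∧
      posBridgeSignW pm p0 p1 n k =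
        (bridgeSignW pm p0 p1 n k - (if k = 0 then p0 ^ n else 0)) / 2) ∧
    ∀ z : ℝ, 0 < z → z < 1 / P1 → ∀ u : ℝ, 0 ≤ u → u ≤ 1 →
      Summable (fun n : ℕ => posExcW pm p0 p1 n * z ^ n) ∧
      HasSum (fun p : ℕ × ℕ => posBridgeSignW pm p0 p1 p.1 p.2 * z ^ p.1 * u ^ p.2)
        ((E z - C z) / (1 - u * E₁ z)) := by
  have hgeneral := positive_bridges_general (𝕜 := ℝ) pm p0 p1
  refine ⟨hgeneral.1, fun z hz hz1 u hu hu1 => hgeneral.2 z ?_ u ?_⟩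
  · rwa [abs_of_pos hpm, abs_of_pos hp0, abs_of_pos hp1, Real.norm_of_nonneg hz.le, mul_comm,
      ← lt_div_iff₀ (by positivity)]
  · rwa [Real.norm_of_nonneg hu]
end
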